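/- For all integers m, n ≥ 1, the set Sing(m,n) of singular m×n matrices with entries in K_∞ has Hausdorff dimension at most mn − mn/(m+n), where the Hausdorff dimension is computed in M_{m,n}(K_∞) ≅ K_∞^{mn} with respect to the sup-norm metric. -/

import Mathlib

/-!
For `k : ℤ`, equip the `F[T]`-module of pairs `w = (p, q)` with the norm
`max (q^k ‖p + A q‖) ‖q‖`; this is the lattice of `A` moved by time `k` along the diagonal flow.
A matrix is singular when these lattices, once renormalised, have arbitrarily short nonzero
vectors for all large `k` (`eventually_high`). Passing from `k` to `k + 1` amounts to choosing
the next digit of `A`, that is one of the `q^(mn)` matrices over `F`, and the dimension bound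
follows from a height function on lattices which, when large, is multiplied on average by at most
`q^(-mn/(m+n)) + o(1)`: the digit strings keeping it large then number `O(Q^j)` after `j` steps
with `Q` close to `q^(mn - mn/(m+n))`, and efficient covers give the bound
(`exists_cover`, `dimH_le_of_covers`).

The height is a Margulis function. Every subspace `W` of `F(T)^(m+n)` has a degree `deg A k W`,
minus the logarithm of the covolume of its integral points, obtained by counting integral points
of bounded norm, which form the finite-dimensional spaces `H A k t L`. Supermodularity of the
degree in `W` (`deg_submodular`) and its concavity in `k` (`drop_mono`) reduce to the Grassmann identity for these spaces. The `drop` of `W` is the loss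
of degree from `k - 1` to `k`; by concavity it never decreases with `k`, and it takes values
in `[0, min m i]`, where `i = dim W`. Both facts are used in the key count `card_drop_eq`: of the
`q^(mn)` next digits at most `q^(mn - (m - a)(i - a))` leave a drop `a` unchanged.

The `score` of `W` is its degree, renormalised in time, diminished by a large multiple `E` of the
strictly concave function `i (m + n - i)` of the dimension, divided by the weight `gam i`, and decreased by `D` times
the drop. If the drop of `W` increases, the score goes down by at least about `D`; if it stays
equal to `a`, the score changes by `(i m / (m + n) - a) / gam i`, and the count above together
with the inequality `numeric` shows that these digits contribute a factor at most
`q^(mn - mn/(m+n))`. This handles a dimension in which one subspace is far better than all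
others. If two subspaces of the same dimension are nearly best, then supermodularity, the concavity
of `gam` and the term in `E` show that their scores are far below the largest score in all
dimensions (`score_gap`), so this dimension contributes negligibly to the height. Summing over
dimensions yields the contraction `sum_height_le`.
-/

open scoped Classical

noncomputable section

variable (F : Type*) [Field F] [Fintype F]

/-- The absolute value `|x| = q^{-v(x)}` on `K_∞ = 𝔽_q((T⁻¹))`. -/
def absv (x : LaurentSeries F) : ℝ :=
  if x = 0 then 0 else (Fintype.card F : ℝ) ^ (-(HahnSeries.order x))

lemma absv_nonneg (x : LaurentSeries F) : 0 ≤ absv F x := by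
  unfold absv; split
  · exact le_rfl
  · exact zpow_nonneg (by positivity) _

lemma absv_pos {x : LaurentSeries F} (hx : x ≠ 0) : 0 < absv F x := by
  unfold absv
  rw [if_neg hx]
  exact zpow_pos (by exact_mod_cast Fintype.card_pos) _

lemma absv_neg_eq (x : LaurentSeries F) : absv F (-x) = absv F x := by
  simp [absv, neg_eq_zero, HahnSeries.order_neg]

lemma absv_add_le (x y : LaurentSeries F) :
    absv F (x + y) ≤ max (absv F x) (absv F y) := by
  rcases eq_or_ne (x + y) 0 with h | h
  · rw [h, show absv F 0 = 0 by simp [absv]]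
    exact le_max_of_le_left (absv_nonneg F x)
  rcases eq_or_ne x 0 with hx | hx
  · simp [hx, le_max_iff, le_refl]
  rcases eq_or_ne y 0 with hy | hy
  · simp [hy, le_max_iff, le_refl]
  have horder := HahnSeries.min_order_le_order_add h
  have h1 : (1 : ℝ) ≤ (Fintype.card F : ℝ) := by exact_mod_cast Fintype.card_pos
  unfold absv
  rw [if_neg h, if_neg hx, if_neg hy]
  rcases le_total (HahnSeries.order x) (HahnSeries.order y) with hc | hc
  · refine le_max_of_le_left (zpow_le_zpow_right₀ h1 (neg_le_neg ?_))
    exact le_trans (by simpa [min_eq_left hc] using le_rfl) ((min_eq_left hc) ▸ horder)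
  · refine le_max_of_le_right (zpow_le_zpow_right₀ h1 (neg_le_neg ?_))
    exact (min_eq_right hc) ▸ horder

instance : MetricSpace (LaurentSeries F) where
  dist x y := absv F (x - y)
  dist_self x := by simp [absv]
  dist_comm x y := by
    show absv F (x - y) = absv F (y - x)
    rw [show (x - y : LaurentSeries F) = -(y - x) by ring, absv_neg_eq]
  dist_triangle x y z := by
    show absv F (x - z) ≤ absv F (x - y) + absv F (y - z)
    have h := absv_add_le F (x - y) (y - z)
    rw [sub_add_sub_cancel] at h
    exact h.trans (max_le_add_of_nonneg (absv_nonneg F _) (absv_nonneg F _))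
  eq_of_dist_eq_zero := by
    intro x y h
    replace h : absv F (x - y) = 0 := h
    by_contra hne
    exact absurd h (ne_of_gt (absv_pos F (sub_ne_zero.mpr hne)))

/-- `M_{m,n}(K_∞)` with the sup-norm metric (the `Pi` metric on `Fin m → Fin n → K_∞`). -/
instance (m n : ℕ) : MetricSpace (Matrix (Fin m) (Fin n) (LaurentSeries F)) :=
  inferInstanceAs (MetricSpace (Fin m → Fin n → LaurentSeries F))

/- We realize the completion `K_∞ = 𝔽_q((T⁻¹))` of `K = 𝔽_q(T)` at the place at infinity as
the field of Laurent series in the uniformizer `u = T⁻¹`; the valuation `v` is the `u`-adic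
valuation (the order), and `|x| = q^{-v(x)}`. -/

/-- sup norm of a vector in `K_∞^d`. -/
def supNorm {d : ℕ} (v : Fin d → LaurentSeries F) : ℝ := ⨆ j, absv F (v j)

/-- the embedding `R = 𝔽_q[T] ↪ K_∞`, sending `T` to `u⁻¹` (`u = T⁻¹` the Laurent
variable). -/
def polyToK : Polynomial F →+* LaurentSeries F :=
  (Polynomial.aeval (HahnSeries.single (-1 : ℤ) (1 : F) : LaurentSeries F)).toRingHom


namespace SingDim

open Polynomial Filter

set_option linter.unusedSectionVars false

/-! ### Laurent coefficients -/

section Lattice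

variable {F}
variable {m n : ℕ}

lemma algebraMap_eq_C (c : F) : algebraMap F (LaurentSeries F) c = HahnSeries.C c := by
  rw [HahnSeries.algebraMap_apply']
  simp

/-- `c ↦ polyToK c` as an `F`-linear map. -/
def pk : F[X] →ₗ[F] LaurentSeries F where
  toFun := polyToK F
  map_add' := map_add _
  map_smul' c p := by
    rw [RingHom.id_apply, ← HahnSeries.C_mul_eq_smul, smul_eq_C_mul, map_mul]
    congr 1
    exact (Polynomial.aeval_C _ c).trans (algebraMap_eq_C c)

lemma pk_apply (c : F[X]) : pk c = polyToK F c := rfl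

lemma mul_smul_laurent (c : F) (x y : LaurentSeries F) : x * (c • y) = c • (x * y) := by
  rw [← HahnSeries.C_mul_eq_smul, ← HahnSeries.C_mul_eq_smul]; ring

lemma single_neg_one_pow (l : ℕ) :
    (HahnSeries.single (-1 : ℤ) (1 : F) : LaurentSeries F) ^ l
      = HahnSeries.single (-(l : ℤ)) (1 : F) := by
  rw [HahnSeries.single_pow]; simp

lemma pk_eq_sum (c : F[X]) :
    pk c = ∑ i ∈ Finset.range (c.natDegree + 1), HahnSeries.single (-(i : ℤ)) (c.coeff i) := by
  conv_lhs => rw [c.as_sum_range_C_mul_X_pow]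
  rw [pk_apply, map_sum]
  refine Finset.sum_congr rfl fun i _ => ?_
  rw [map_mul, map_pow]
  have h1 : polyToK F (C (c.coeff i)) = HahnSeries.C (c.coeff i) :=
    (Polynomial.aeval_C _ _).trans (algebraMap_eq_C _)
  have h2 : polyToK F X = HahnSeries.single (-1 : ℤ) (1 : F) := Polynomial.aeval_X _
  rw [h1, h2, single_neg_one_pow, HahnSeries.C_mul_eq_smul]
  ext j
  rw [HahnSeries.coeff_smul, HahnSeries.coeff_single, HahnSeries.coeff_single]
  split <;> simp

lemma coeff_pk (c : F[X]) (l : ℕ) : (pk c).coeff (-(l : ℤ)) = c.coeff l := by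
  rw [pk_eq_sum, HahnSeries.coeff_sum]
  simp only [HahnSeries.coeff_single]
  rw [Finset.sum_eq_single l]
  · simp
  · intro i _ hi
    rw [if_neg (by lia)]
  · intro h
    rw [if_pos rfl, coeff_eq_zero_of_natDegree_lt (by simpa using h)]

lemma coeff_pk_pos (c : F[X]) {j : ℤ} (hj : 0 < j) : (pk c).coeff j = 0 := by
  rw [pk_eq_sum, HahnSeries.coeff_sum]
  exact Finset.sum_eq_zero fun i _ => HahnSeries.coeff_single_of_ne (by lia)

lemma pk_X_mul (c : F[X]) : pk (X * c) = HahnSeries.single (-1 : ℤ) (1 : F) * pk c := by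
  rw [pk_apply, map_mul, pk_apply]
  congr 1
  simp [polyToK]

lemma pk_mul (b c : F[X]) : pk (b * c) = pk b * pk c := by
  simp [pk_apply]

lemma coeff_mul_eq_zero {x y : LaurentSeries F} {a b : ℤ} (hx : ∀ j < a, x.coeff j = 0)
    (hy : ∀ j < b, y.coeff j = 0) {j : ℤ} (hj : j < a + b) : (x * y).coeff j = 0 := by
  rw [HahnSeries.coeff_mul]
  refine Finset.sum_eq_zero fun ij hij => ?_
  have h := (Finset.mem_antidiagonal.mp hij)
  by_cases h1 : ij.1 < a
  · rw [hx _ h1, zero_mul]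
  · rw [hy _ (by have := h.2.2; lia), mul_zero]

/-! ### The filtered lattice attached to a matrix -/

/-- The `F[T]`-module `F[T]^m × F[T]^n`, whose elements are the pairs `(p, q)`. -/
abbrev Vec (F : Type*) [Field F] (m n : ℕ) := Fin m ⊕ Fin n → F[X]

/-- The rows of `p + A q`, as `F`-linear functions of `w = (p, q)`. -/
def fx (A : Matrix (Fin m) (Fin n) (LaurentSeries F)) (r : Fin m) :
    Vec F m n →ₗ[F] LaurentSeries F where
  toFun w := pk (w (.inl r)) + ∑ l, A r l * pk (w (.inr l))
  map_add' v w := by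
    simp only [Pi.add_apply, map_add, mul_add, Finset.sum_add_distrib]; abel
  map_smul' c w := by
    simp only [Pi.smul_apply, map_smul, RingHom.id_apply, smul_add, Finset.smul_sum,
      mul_smul_laurent]

lemma fx_apply (A : Matrix (Fin m) (Fin n) (LaurentSeries F)) (r : Fin m) (w : Vec F m n) :
    fx A r w = pk (w (.inl r)) + ∑ l, A r l * pk (w (.inr l)) := rfl

lemma fx_smul (A : Matrix (Fin m) (Fin n) (LaurentSeries F)) (r : Fin m) (c : F[X])
    (w : Vec F m n) : fx A r (c • w) = pk c * fx A r w := by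
  simp only [fx_apply, Pi.smul_apply, smul_eq_mul, pk_mul, mul_add, Finset.mul_sum]
  congr 1
  exact Finset.sum_congr rfl fun l _ => by ring

/-- The vectors `w = (p, q)` of the `F[T]`-module `L` with `‖q‖ ≤ q^t` and
`‖p + A q‖ ≤ q^(t - k)`: the part of `L` of norm at most `q^t` with respect to
`max (q^k ‖p + A q‖) ‖q‖`. -/
def H (A : Matrix (Fin m) (Fin n) (LaurentSeries F)) (k t : ℤ) (L : Submodule F[X] (Vec F m n)) :
    Submodule F (Vec F m n) where
  carrier := {w | w ∈ L ∧ (∀ r, ∀ j < k - t, (fx A r w).coeff j = 0) ∧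
    ∀ l, ∀ j < -t, (pk (w (.inr l))).coeff j = 0}
  zero_mem' := by simp
  add_mem' := by
    rintro v w ⟨h1, h2, h3⟩ ⟨g1, g2, g3⟩
    refine ⟨add_mem h1 g1, fun r j hj => ?_, fun l j hj => ?_⟩
    · rw [map_add, HahnSeries.coeff_add, h2 r j hj, g2 r j hj, add_zero]
    · rw [Pi.add_apply, map_add, HahnSeries.coeff_add, h3 l j hj, g3 l j hj, add_zero]
  smul_mem' := by
    rintro c w ⟨h1, h2, h3⟩
    refine ⟨?_, fun r j hj => ?_, fun l j hj => ?_⟩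
    · exact Submodule.smul_of_tower_mem L c h1
    · rw [map_smul, HahnSeries.coeff_smul, h2 r j hj, smul_zero]
    · rw [Pi.smul_apply, map_smul, HahnSeries.coeff_smul, h3 l j hj, smul_zero]

variable {A A' : Matrix (Fin m) (Fin n) (LaurentSeries F)} {k k' t t' : ℤ}
  {L L' : Submodule F[X] (Vec F m n)}

lemma mem_H {w : Vec F m n} : w ∈ H A k t L ↔ w ∈ L ∧
    (∀ r, ∀ j < k - t, (fx A r w).coeff j = 0) ∧
    ∀ l, ∀ j < -t, (pk (w (.inr l))).coeff j = 0 := Iff.rfl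

lemma H_mono (hL : L ≤ L') (ht : t ≤ t') (hk : k' - t' ≤ k - t) : H A k t L ≤ H A k' t' L' :=
  fun _ hw => ⟨hL hw.1, fun r j hj => hw.2.1 r j (by lia), fun l j hj => hw.2.2 l j (by lia)⟩

lemma H_inf : H A k t (L ⊓ L') = H A k t L ⊓ H A k t L' := by
  ext w
  simp only [Submodule.mem_inf, mem_H]
  tauto

lemma H_sup_le : H A k t L ⊔ H A k t L' ≤ H A k t (L ⊔ L') :=
  sup_le (H_mono le_sup_left le_rfl le_rfl) (H_mono le_sup_right le_rfl le_rfl)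

/-- `A` and `A'` agree up to an error of norm at most `q^(-k)`. -/
def Agree (A A' : Matrix (Fin m) (Fin n) (LaurentSeries F)) (k : ℤ) : Prop :=
  ∀ r l, ∀ j < k, (A r l).coeff j = (A' r l).coeff j

lemma Agree.symm (h : Agree A A' k) : Agree A' A k := fun r l j hj => (h r l j hj).symm

lemma Agree.trans {A'' : Matrix (Fin m) (Fin n) (LaurentSeries F)} (h : Agree A A' k)
    (h' : Agree A' A'' k) : Agree A A'' k := fun r l j hj => (h r l j hj).trans (h' r l j hj)

lemma Agree.mono (h : Agree A A' k) (hk : k' ≤ k) : Agree A A' k' :=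
  fun r l j hj => h r l j (by lia)

lemma H_le_of_agree (h : Agree A A' k) : H A k t L ≤ H A' k t L := by
  rintro w ⟨h1, h2, h3⟩
  refine ⟨h1, fun r j hj => ?_, h3⟩
  have key : fx A' r w = fx A r w - ∑ l, (A r l - A' r l) * pk (w (.inr l)) := by
    simp only [fx_apply, sub_mul, Finset.sum_sub_distrib]; abel
  rw [key, HahnSeries.coeff_sub, h2 r j hj, HahnSeries.coeff_sum, Finset.sum_eq_zero, sub_zero]
  intro l _
  refine coeff_mul_eq_zero (a := k) (b := -t) (fun i hi => ?_) (h3 l) (by lia)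
  rw [HahnSeries.coeff_sub, h r l i hi, sub_self]

lemma H_congr (h : Agree A A' k) : H A k t L = H A' k t L :=
  le_antisymm (H_le_of_agree h) (H_le_of_agree h.symm)

lemma H_eq_inf (h : k' ≤ k) (ht : t' ≤ t) :
    H A k' t' L ⊓ H A (k' + (t - t') + 1) t L = H A (k' + 1) t' L := by
  ext w
  simp only [Submodule.mem_inf, mem_H]
  constructor
  · rintro ⟨⟨h1, h2, h3⟩, -, g2, g3⟩
    exact ⟨h1, fun r j hj => g2 r j (by lia), h3⟩
  · rintro ⟨h1, h2, h3⟩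
    exact ⟨⟨h1, fun r j hj => h2 r j (by lia), h3⟩, h1, fun r j hj => h2 r j (by lia),
      fun l j hj => h3 l j (by lia)⟩

/-- The coefficients of `q` and of `p + A q` in the relevant range determine `w ∈ H A k t L`. -/
def coeffMap (A : Matrix (Fin m) (Fin n) (LaurentSeries F)) (k t : ℤ) :
    Vec F m n →ₗ[F]
      (Fin m → Fin (t - k + 1).toNat → F) × (Fin n → Fin (t + 1).toNat → F) where
  toFun w := (fun r j => (fx A r w).coeff (-(j : ℤ)), fun l j => (pk (w (.inr l))).coeff (-(j : ℤ)))
  map_add' v w := by ext <;> simp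
  map_smul' c w := by ext <;> simp

lemma pk_injective : Function.Injective (pk (F := F)) := by
  rw [← LinearMap.ker_eq_bot, LinearMap.ker_eq_bot']
  intro c hc
  ext l
  rw [← coeff_pk, hc]; simp

lemma coeffMap_injective {w : Vec F m n} (hw : w ∈ H A k t L) (h0 : coeffMap A k t w = 0) :
    w = 0 := by
  obtain ⟨-, h2, h3⟩ := hw
  have hq : ∀ l, w (.inr l) = 0 := by
    intro l
    ext j
    rw [← coeff_pk, coeff_zero]
    by_cases hj : (j : ℤ) ≤ t
    · exact congrFun (congrFun (congrArg Prod.snd h0) l) ⟨j, by lia⟩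
    · exact h3 l _ (by lia)
  have hp : ∀ r, w (.inl r) = 0 := by
    intro r
    have e : fx A r w = pk (w (.inl r)) := by simp [fx_apply, hq]
    ext j
    rw [← coeff_pk, coeff_zero, ← e]
    by_cases hj : (j : ℤ) ≤ t - k
    · exact congrFun (congrFun (congrArg Prod.fst h0) r) ⟨j, by lia⟩
    · exact h2 r _ (by lia)
  funext x
  rcases x with r | l
  · exact hp r
  · exact hq l

lemma coeffMap_domRestrict_injective :
    Function.Injective ((coeffMap A k t).domRestrict (H A k t L)) := by
  rw [← LinearMap.ker_eq_bot, LinearMap.ker_eq_bot']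
  rintro ⟨w, hw⟩ h
  exact Subtype.ext (coeffMap_injective hw h)

instance : Module.Finite F (H A k t L) :=
  Module.Finite.of_injective _ coeffMap_domRestrict_injective

lemma finrank_H_le : Module.finrank F (H A k t L) ≤ m * (t - k + 1).toNat + n * (t + 1).toNat := by
  refine (LinearMap.finrank_le_finrank_of_injective coeffMap_domRestrict_injective).trans ?_
  simp [Module.finrank_prod, Module.finrank_pi_fintype]

/-- Multiplication by `T` on `F[T]^m × F[T]^n`. -/
def mulX : Vec F m n →ₗ[F] Vec F m n := LinearMap.lsmul F[X] (Vec F m n) X |>.restrictScalars F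

lemma mulX_apply (w : Vec F m n) : mulX w = (X : F[X]) • w := rfl

lemma mulX_injective : Function.Injective (mulX (F := F) (m := m) (n := n)) := by
  intro v w h
  rw [mulX_apply, mulX_apply] at h
  funext i
  have := congrFun h i
  simpa using this

lemma X_smul_mem {w : Vec F m n} (h : w ∈ L) : (X : F[X]) • w ∈ H A k (t + 1) L ↔ w ∈ H A k t L := by
  have e : ∀ x : LaurentSeries F, pk (X : F[X]) * x = HahnSeries.single (-1 : ℤ) (1 : F) * x := by
    intro x
    have := pk_X_mul (1 : F[X])
    rw [pk_mul] at this
    have h1 : pk (1 : F[X]) = 1 := by simp [pk_apply]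
    rw [h1, mul_one, mul_one] at this
    rw [this]
  have e2 : ∀ (x : LaurentSeries F) (j : ℤ), (pk (X : F[X]) * x).coeff j = x.coeff (j + 1) := by
    intro x j
    rw [e, HahnSeries.coeff_single_mul, one_mul, sub_neg_eq_add]
  simp only [mem_H, fx_smul, Pi.smul_apply, smul_eq_mul, pk_mul, e2]
  constructor
  · rintro ⟨-, h2, h3⟩
    refine ⟨h, fun r j hj => ?_, fun l j hj => ?_⟩
    · simpa using h2 r (j - 1) (by lia)
    · simpa using h3 l (j - 1) (by lia)
  · rintro ⟨-, h2, h3⟩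
    exact ⟨L.smul_mem _ h, fun r j hj => h2 r _ (by lia), fun l j hj => h3 l _ (by lia)⟩

/-- The increments of `t ↦ dim H A k t L` are nondecreasing when `L` is saturated at `T`. -/
lemma finrank_H_convex (hL : ∀ w : Vec F m n, (X : F[X]) • w ∈ L → w ∈ L) :
    2 * Module.finrank F (H A k t L) ≤
      Module.finrank F (H A k (t + 1) L) + Module.finrank F (H A k (t - 1) L) := by
  have hle : H A k t L ⊔ (H A k t L).map mulX ≤ H A k (t + 1) L := by
    refine sup_le (H_mono le_rfl (by lia) (by lia)) ?_
    rintro _ ⟨w, hw, rfl⟩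
    exact (X_smul_mem hw.1).2 hw
  have hinf : H A k t L ⊓ (H A k t L).map mulX ≤ (H A k (t - 1) L).map mulX := by
    rintro _ ⟨hv, w, hw, rfl⟩
    refine ⟨w, ?_, rfl⟩
    have : (X : F[X]) • w ∈ H A k (t - 1 + 1) L := by simpa [mulX_apply] using hv
    exact (X_smul_mem hw.1).1 this
  have e1 : ∀ s, Module.finrank F ((H A k s L).map mulX) = Module.finrank F (H A k s L) :=
    fun s => (Submodule.equivMapOfInjective mulX mulX_injective (H A k s L)).symm.finrank_eq
  have h1 := Submodule.finrank_sup_add_finrank_inf_eq (H A k t L) ((H A k t L).map mulX)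
  have h2 := Submodule.finrank_mono hle
  have h3 := Submodule.finrank_mono hinf
  rw [e1] at h1 h3
  lia

end Lattice

/-! ### Subspaces and their degrees -/

section Degree

variable {F}
variable {m n : ℕ}

/-- A convex integer sequence squeezed between two affine functions of slope `i` is eventually
affine of slope `i`, and all its increments are at most `i`. -/
lemma eventually_affine (h : ℤ → ℤ) (i : ℤ) (hconv : ∀ t, 2 * h t ≤ h (t + 1) + h (t - 1))
    (C t₀ : ℤ) (hlow : ∀ t, t₀ ≤ t → i * (t + 1) - C ≤ h t)
    (hup : ∀ t, t₀ ≤ t → h t ≤ i * (t + 1) + C) :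
    (∃ D, ∀ᶠ t in atTop, h t = i * (t + 1) + D) ∧ ∀ t, h (t + 1) ≤ h t + i := by
  have hinc : ∀ t, h (t + 1) ≤ h t + i := by
    intro t
    by_contra! hc
    -- By convexity one increment above `i` persists, contradicting the upper bound.
    have grow : ∀ s : ℕ, h (t + s) + (i + 1) ≤ h (t + s + 1) ∧ h t + (i + 1) * s ≤ h (t + s) := by
      intro s
      induction s with
      | zero => constructor <;> simp; lia
      | succ s ih =>
        have := hconv (t + s + 1)
        rw [add_sub_cancel_right] at this
        push_cast
        rw [show t + ((s : ℤ) + 1) = t + s + 1 by ring]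
        constructor
        · lia
        · linarith [ih.1, ih.2, show (i + 1) * ((s : ℤ) + 1) = (i + 1) * s + (i + 1) by ring]
    have key : ∀ s : ℕ, t₀ ≤ t + s → (s : ℤ) ≤ i * (t + 1) + C - h t := by
      intro s hs
      have h1 := (grow s).2
      have h2 := hup _ hs
      nlinarith
    have := key ((t₀ - t).toNat + (i * (t + 1) + C - h t).toNat + 1) (by lia)
    push_cast at this
    lia
  refine ⟨?_, hinc⟩
  have hmono : ∀ s t, s ≤ t → h t - i * (t + 1) ≤ h s - i * (s + 1) := by
    intro s t hst
    induction t, hst using Int.leInduction with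
    | base => exact le_rfl
    | succ t _ ih => nlinarith [hinc t]
  obtain ⟨D, ⟨t₁, ht₁, hD⟩, hmin⟩ :=
    Int.exists_least_of_bdd (P := fun D => ∃ t, t₀ ≤ t ∧ h t - i * (t + 1) = D)
      ⟨-C, by rintro _ ⟨t, ht, rfl⟩; linarith [hlow t ht]⟩ ⟨_, t₀, le_rfl, rfl⟩
  refine ⟨D, eventually_atTop.2 ⟨t₁, fun t ht => ?_⟩⟩
  have h1 := hmono _ _ ht
  have h2 := hmin _ ⟨t, by lia, rfl⟩
  lia

/-- The field `F(T)`. -/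
abbrev KF (F : Type*) [Field F] := FractionRing F[X]

/-- The `F(T)`-vector space spanned by `Vec F m n`. -/
abbrev VecK (F : Type*) [Field F] (m n : ℕ) := Fin m ⊕ Fin n → KF F

/-- The inclusion `F[T]^(m+n) → F(T)^(m+n)`. -/
def incl : Vec F m n →ₗ[F[X]] VecK F m n := (Algebra.linearMap F[X] (KF F)).compLeft _

lemma incl_apply (w : Vec F m n) (x) : incl w x = algebraMap F[X] (KF F) (w x) := rfl

lemma incl_injective : Function.Injective (incl (F := F) (m := m) (n := n)) := by
  intro v w h
  funext x
  exact IsFractionRing.injective F[X] (KF F) (congrFun h x)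

/-- The saturated `F[T]`-module of integral points of a subspace of `F(T)^(m+n)`. -/
def lat (W : Submodule (KF F) (VecK F m n)) : Submodule F[X] (Vec F m n) :=
  (W.restrictScalars F[X]).comap incl

lemma mem_lat {W : Submodule (KF F) (VecK F m n)} {w : Vec F m n} : w ∈ lat W ↔ incl w ∈ W :=
  Iff.rfl

lemma lat_mono {W W' : Submodule (KF F) (VecK F m n)} (h : W ≤ W') : lat W ≤ lat W' :=
  fun _ hw => h hw

lemma lat_inf {W W' : Submodule (KF F) (VecK F m n)} : lat (W ⊓ W') = lat W ⊓ lat W' := rfl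

lemma lat_bot : lat (⊥ : Submodule (KF F) (VecK F m n)) = ⊥ := by
  rw [eq_bot_iff]
  intro w hw
  have : incl w = 0 := hw
  exact incl_injective (by rw [this, map_zero])

lemma lat_saturated {W : Submodule (KF F) (VecK F m n)} (w : Vec F m n)
    (h : (X : F[X]) • w ∈ lat W) : w ∈ lat W := by
  rw [mem_lat, map_smul, ← algebraMap_smul (KF F)] at h
  exact (W.smul_mem_iff (by simp)).1 h

/-- Clearing the denominators of a basis of `W` gives independent integral points of `W`. -/
lemma exists_integral_basis (W : Submodule (KF F) (VecK F m n)) :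
    ∃ b : Fin (Module.finrank (KF F) W) → Vec F m n,
      LinearIndependent F[X] b ∧ ∀ j, b j ∈ lat W := by
  let v := Module.finBasis (KF F) W
  have h1 : ∀ j, ∃ c : nonZeroDivisors F[X], ∃ w : Vec F m n,
      incl w = (algebraMap F[X] (KF F) c) • (v j : VecK F m n) := by
    intro j
    obtain ⟨c, hc⟩ := IsLocalization.exist_integer_multiples_of_finite (nonZeroDivisors F[X])
      (v j : VecK F m n)
    choose w hw using hc
    refine ⟨c, w, ?_⟩
    funext x
    rw [incl_apply, hw x]
    simp [Algebra.smul_def]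
  choose c w hw using h1
  have hc : ∀ j, algebraMap F[X] (KF F) (c j) ≠ 0 := fun j => by
    simpa using nonZeroDivisors.ne_zero (c j).2
  refine ⟨w, ?_, fun j => ?_⟩
  · have hv : LinearIndependent (KF F) (fun j => (v j : VecK F m n)) :=
      v.linearIndependent.map' W.subtype (by simp)
    have h2 := hv.units_smul (fun j => Units.mk0 _ (hc j))
    have h3 : LinearIndependent (KF F) (incl ∘ w) := by
      convert h2 using 1
      funext j
      exact hw j
    exact LinearIndependent.of_comp incl ((LinearIndependent.iff_fractionRing F[X] (KF F)).2 h3)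
  · rw [mem_lat, hw]
    exact W.smul_mem _ (v j).2

variable {A A' : Matrix (Fin m) (Fin n) (LaurentSeries F)} {k k' t t' : ℤ}
  {L L' : Submodule F[X] (Vec F m n)} {W W' : Submodule (KF F) (VecK F m n)}

lemma exists_mem_H (A : Matrix (Fin m) (Fin n) (LaurentSeries F)) (k : ℤ) {w : Vec F m n}
    (hw : w ∈ L) : ∃ t, w ∈ H A k t L := by
  obtain ⟨M, hM⟩ := Finite.bddAbove_range (fun r => k - (fx A r w).order)
  obtain ⟨N, hN⟩ := Finite.bddAbove_range (fun l => -(pk (w (.inr l))).order)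
  refine ⟨max M N, hw, fun r j hj => ?_, fun l j hj => ?_⟩
  · have : k - (fx A r w).order ≤ M := hM ⟨r, rfl⟩
    exact HahnSeries.coeff_eq_zero_of_lt_order (by lia)
  · have : -(pk (w (.inr l))).order ≤ N := hN ⟨l, rfl⟩
    exact HahnSeries.coeff_eq_zero_of_lt_order (by lia)

lemma X_pow_smul_mem {w : Vec F m n} (hw : w ∈ H A k t L) (e : ℕ) :
    (X ^ e : F[X]) • w ∈ H A k (t + e) L := by
  induction e with
  | zero => simpa using hw
  | succ e ih =>
    rw [pow_succ', mul_smul]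
    push_cast
    rw [← add_assoc]
    exact (X_smul_mem ih.1).2 ih

/-- Independent vectors of norm at most `q^t`, multiplied by polynomials of degree at most `s`,
fill up a large part of the vectors of norm at most `q^(t + s)`. -/
lemma le_finrank_H {i : ℕ} {b : Fin i → Vec F m n} (hb : LinearIndependent F[X] b)
    (hbH : ∀ j, b j ∈ H A k t L) (s : ℕ) : i * (s + 1) ≤ Module.finrank F (H A k (t + s) L) := by
  have h1 : LinearIndependent F (fun e : Fin (s + 1) => (X ^ (e : ℕ) : F[X])) := by
    have := (Polynomial.basisMonomials F).linearIndependent.comp (fun e : Fin (s + 1) => (e : ℕ))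
      Fin.val_injective
    convert this using 1
    funext e
    simp [X_pow_eq_monomial]
  have h2 := linearIndependent_smul h1 hb
  let u : Fin (s + 1) × Fin i → H A k (t + s) L := fun p =>
    ⟨(X ^ (p.1 : ℕ) : F[X]) • b p.2,
      have := p.1.2
      H_mono le_rfl (by lia) (by lia) (X_pow_smul_mem (hbH p.2) p.1)⟩
  have h3 : LinearIndependent F u := LinearIndependent.of_comp (H A k (t + s) L).subtype h2
  have := h3.fintype_card_le_finrank
  simpa [mul_comm] using this

lemma exists_lower (A : Matrix (Fin m) (Fin n) (LaurentSeries F)) (k : ℤ)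
    (W : Submodule (KF F) (VecK F m n)) :
    ∃ t₀ : ℤ, ∀ t, t₀ ≤ t →
      (Module.finrank (KF F) W : ℤ) * (t - t₀ + 1) ≤ Module.finrank F (H A k t (lat W)) := by
  obtain ⟨b, hb, hbW⟩ := exists_integral_basis W
  choose τ hτ using fun j => exists_mem_H A k (hbW j)
  obtain ⟨M, hM⟩ := Finite.bddAbove_range τ
  refine ⟨M, fun t ht => ?_⟩
  have h1 := le_finrank_H hb (t := M) (A := A) (k := k) (L := lat W)
    (fun j => H_mono le_rfl (hM ⟨j, rfl⟩) (by have : τ j ≤ M := hM ⟨j, rfl⟩; lia) (hτ j))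
    (t - M).toNat
  have e : M + ((t - M).toNat : ℤ) = t := by lia
  rw [e] at h1
  have e2 : ((t - M).toNat : ℤ) = t - M := by lia
  calc (Module.finrank (KF F) W : ℤ) * (t - M + 1)
      = ((Module.finrank (KF F) W * ((t - M).toNat + 1) : ℕ) : ℤ) := by push_cast; rw [e2]
    _ ≤ _ := by exact_mod_cast h1

lemma H_sup_le_lat : H A k t (lat W) ⊔ H A k t (lat W') ≤ H A k t (lat (W ⊔ W')) :=
  sup_le (H_mono (lat_mono le_sup_left) le_rfl le_rfl)
    (H_mono (lat_mono le_sup_right) le_rfl le_rfl)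

lemma finrank_H_bot : Module.finrank F (H A k t (⊥ : Submodule F[X] (Vec F m n))) = 0 := by
  have : H A k t (⊥ : Submodule F[X] (Vec F m n)) = ⊥ := by
    rw [eq_bot_iff]
    exact fun w hw => hw.1
  rw [this, finrank_bot]

lemma finrank_H_submodular :
    Module.finrank F (H A k t (lat W)) + Module.finrank F (H A k t (lat W')) ≤
      Module.finrank F (H A k t (lat (W ⊔ W'))) + Module.finrank F (H A k t (lat (W ⊓ W'))) := by
  rw [← Submodule.finrank_sup_add_finrank_inf_eq, lat_inf, H_inf]
  exact Nat.add_le_add_right (Submodule.finrank_mono H_sup_le_lat) _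

lemma finrank_VecK : Module.finrank (KF F) (VecK F m n) = m + n := by simp

/-- The number `q^h(t)` of integral points of `W` of norm at most `q^t` has `h(t)` eventually affine
in `t`, of slope `dim W`. The upper bound comes from the lower bound for a complement of `W`. -/
lemma finrank_H_structure (A : Matrix (Fin m) (Fin n) (LaurentSeries F)) (k : ℤ)
    (W : Submodule (KF F) (VecK F m n)) :
    (∃ D : ℤ, ∀ᶠ t in atTop, (Module.finrank F (H A k t (lat W)) : ℤ)
        = (Module.finrank (KF F) W : ℤ) * (t + 1) + D) ∧
      ∀ t, (Module.finrank F (H A k (t + 1) (lat W)) : ℤ)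
        ≤ Module.finrank F (H A k t (lat W)) + Module.finrank (KF F) W := by
  obtain ⟨t₁, h1⟩ := exists_lower A k W
  obtain ⟨W', hW'⟩ := Submodule.exists_isCompl W
  obtain ⟨t₂, h2⟩ := exists_lower A k W'
  have hdim : Module.finrank (KF F) W + Module.finrank (KF F) W' = m + n := by
    rw [Submodule.finrank_add_eq_of_isCompl hW', finrank_VecK]
  set i := Module.finrank (KF F) W
  set i' := Module.finrank (KF F) W'
  have hup : ∀ t, max (max t₁ t₂) (max k 0) ≤ t →
      (Module.finrank F (H A k t (lat W)) : ℤ) ≤ i * (t + 1) + (i' * t₂ - m * k) := by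
    intro t ht
    have h3 := h2 t (by lia)
    have h4 := finrank_H_submodular (A := A) (k := k) (t := t) (W := W) (W' := W')
    rw [hW'.inf_eq_bot, lat_bot, finrank_H_bot] at h4
    have h5 := finrank_H_le (A := A) (k := k) (t := t) (L := lat (W ⊔ W'))
    have h6 : (Module.finrank F (H A k t (lat (W ⊔ W'))) : ℤ)
        ≤ m * (t - k + 1) + n * (t + 1) := by
      have e1 : ((t - k + 1).toNat : ℤ) = t - k + 1 := by lia
      have e2 : ((t + 1).toNat : ℤ) = t + 1 := by lia
      rw [← e1, ← e2]
      exact_mod_cast h5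
    have h7 : (i : ℤ) + i' = m + n := by exact_mod_cast hdim
    have h8 : (Module.finrank F (H A k t (lat W)) : ℤ) + Module.finrank F (H A k t (lat W'))
        ≤ Module.finrank F (H A k t (lat (W ⊔ W'))) := by exact_mod_cast h4
    have h9 : ((i : ℤ) + i') * (t + 1) = (m + n) * (t + 1) := by rw [h7]
    linarith
  refine eventually_affine (fun t => (Module.finrank F (H A k t (lat W)) : ℤ)) i (fun t => ?_)
    (max (i * t₁) (i' * t₂ - m * k)) (max (max t₁ t₂) (max k 0)) (fun t ht => ?_) (fun t ht => ?_)
  · exact_mod_cast finrank_H_convex (lat_saturated (W := W))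
  · have := h1 t (by lia)
    have := le_max_left ((i : ℤ) * t₁) (i' * t₂ - m * k)
    linarith
  · exact (hup t ht).trans (by gcongr; exact le_max_right _ _)

/-- The degree of the subspace `W` for the norm `max (q^k ‖p + A q‖) ‖q‖`, that is minus the
logarithm of the covolume of its integral points. It is defined through the number of integral
points of bounded norm, as in the Riemann-Roch theorem. -/
def deg (A : Matrix (Fin m) (Fin n) (LaurentSeries F)) (k : ℤ)
    (W : Submodule (KF F) (VecK F m n)) : ℤ := (finrank_H_structure A k W).1.choose

lemma deg_spec (A : Matrix (Fin m) (Fin n) (LaurentSeries F)) (k : ℤ)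
    (W : Submodule (KF F) (VecK F m n)) :
    ∀ᶠ t in atTop, (Module.finrank F (H A k t (lat W)) : ℤ)
        = (Module.finrank (KF F) W : ℤ) * (t + 1) + deg A k W :=
  (finrank_H_structure A k W).1.choose_spec

lemma deg_congr (h : Agree A A' k) : deg A k W = deg A' k W := by
  obtain ⟨t, h1, h2⟩ := ((deg_spec A k W).and (deg_spec A' k W)).exists
  rw [H_congr h] at h1
  lia

lemma deg_bot : deg A k (⊥ : Submodule (KF F) (VecK F m n)) = 0 := by
  obtain ⟨t, h1⟩ := (deg_spec A k (⊥ : Submodule (KF F) (VecK F m n))).exists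
  rw [lat_bot, finrank_H_bot, finrank_bot] at h1
  simpa using h1.symm

lemma deg_top_le : deg A k (⊤ : Submodule (KF F) (VecK F m n)) ≤ -(m * k) := by
  obtain ⟨t, h1, h2⟩ := ((deg_spec A k (⊤ : Submodule (KF F) (VecK F m n))).and
    (eventually_ge_atTop (max k 0))).exists
  rw [finrank_top, finrank_VecK] at h1
  have h5 := finrank_H_le (A := A) (k := k) (t := t)
    (L := lat (⊤ : Submodule (KF F) (VecK F m n)))
  have h6 : (Module.finrank F (H A k t (lat (⊤ : Submodule (KF F) (VecK F m n)))) : ℤ)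
      ≤ m * (t - k + 1) + n * (t + 1) := by
    have e1 : ((t - k + 1).toNat : ℤ) = t - k + 1 := by lia
    have e2 : ((t + 1).toNat : ℤ) = t + 1 := by lia
    rw [← e1, ← e2]
    exact_mod_cast h5
  push_cast at h1
  linarith

lemma deg_submodular : deg A k W + deg A k W' ≤ deg A k (W ⊔ W') + deg A k (W ⊓ W') := by
  obtain ⟨t, h1, h2, h3, h4⟩ := ((deg_spec A k W).and ((deg_spec A k W').and
    ((deg_spec A k (W ⊔ W')).and (deg_spec A k (W ⊓ W'))))).exists
  have h5 := finrank_H_submodular (A := A) (k := k) (t := t) (W := W) (W' := W')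
  have h6 := Submodule.finrank_sup_add_finrank_inf_eq W W'
  zify at h5 h6
  have h7 : ((Module.finrank (KF F) ↥(W ⊔ W') : ℤ) + Module.finrank (KF F) ↥(W ⊓ W')) * (t + 1)
      = (Module.finrank (KF F) W + Module.finrank (KF F) W') * (t + 1) := by rw [h6]
  linarith

lemma deg_nonpos (hk : 0 ≤ k) : deg A k W ≤ 0 := by
  have h1 : ∀ t, -1 ≤ t →
      (Module.finrank F (H A k t (lat W)) : ℤ) ≤ Module.finrank (KF F) W * (t + 1) := by
    intro t ht
    induction t, ht using Int.leInduction with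
    | base =>
      have := finrank_H_le (A := A) (k := k) (t := -1) (L := lat W)
      have e : (-1 - k + 1).toNat = 0 := by lia
      rw [e] at this
      simpa using this
    | succ t _ ih =>
      have := (finrank_H_structure A k W).2 t
      linarith
  obtain ⟨t, h2, h3⟩ := ((deg_spec A k W).and (eventually_ge_atTop (-1))).exists
  have := h1 t h3
  lia

/-- The drop of `W` at time `k`: the loss of degree from time `k - 1` to time `k`. -/
def drop (A : Matrix (Fin m) (Fin n) (LaurentSeries F)) (k : ℤ)
    (W : Submodule (KF F) (VecK F m n)) : ℤ := deg A (k - 1) W - deg A k W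

lemma deg_succ_le : deg A (k + 1) W ≤ deg A k W := by
  obtain ⟨t, h1, h2⟩ := ((deg_spec A k W).and (deg_spec A (k + 1) W)).exists
  have := Submodule.finrank_mono (H_mono (A := A) (le_refl (lat W)) (le_refl t)
    (show k - t ≤ k + 1 - t by lia))
  lia

lemma drop_nonneg : 0 ≤ drop A k W := by
  have := deg_succ_le (A := A) (k := k - 1) (W := W)
  rw [sub_add_cancel] at this
  rw [drop]; lia

lemma tendsto_sub_one : Tendsto (fun t : ℤ => t - 1) atTop atTop :=
  tendsto_atTop_add_const_right _ (-1) tendsto_id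

lemma drop_le_finrank : drop A (k + 1) W ≤ Module.finrank (KF F) W := by
  obtain ⟨t, h1, h2⟩ := ((tendsto_sub_one.eventually (deg_spec A k W)).and
    (deg_spec A (k + 1) W)).exists
  have := Submodule.finrank_mono (H_mono (A := A) (le_refl (lat W)) (show t - 1 ≤ t by lia)
    (show k + 1 - t ≤ k - (t - 1) by lia))
  rw [drop, add_sub_cancel_right]
  have h3 : (Module.finrank (KF F) W : ℤ) * (t + 1)
    = Module.finrank (KF F) W * (t - 1 + 1) + Module.finrank (KF F) W := by ring
  lia

/-- Concavity of `k ↦ deg A k W`. -/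
lemma drop_mono : drop A k W ≤ drop A (k + 1) W := by
  obtain ⟨t, h1, h2, h3, h4⟩ := ((tendsto_sub_one.eventually (deg_spec A (k - 1) W)).and
    ((tendsto_sub_one.eventually (deg_spec A k W)).and ((deg_spec A k W).and
    (deg_spec A (k + 1) W)))).exists
  have h5 := Submodule.finrank_sup_add_finrank_inf_eq (H A (k - 1) (t - 1) (lat W))
    (H A (k + 1) t (lat W))
  have h6 : H A (k - 1) (t - 1) (lat W) ⊔ H A (k + 1) t (lat W) ≤ H A k t (lat W) :=
    sup_le (H_mono le_rfl (by lia) (by lia)) (H_mono le_rfl (by lia) (by lia))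
  have h7 : H A (k - 1) (t - 1) (lat W) ⊓ H A (k + 1) t (lat W) = H A k (t - 1) (lat W) := by
    have := H_eq_inf (A := A) (L := lat W) (k := k) (k' := k - 1) (t' := t - 1) (t := t)
      (by lia) (by lia)
    convert this using 3 <;> lia
  rw [h7] at h5
  have h8 := Submodule.finrank_mono h6
  rw [drop, drop, add_sub_cancel_right]
  lia

/-- The coefficients of `u^(k - t)` in `p + A q`, with `u = T⁻¹`: the leading ones when
`w ∈ H A k t L`. -/
def leadX (A : Matrix (Fin m) (Fin n) (LaurentSeries F)) (k t : ℤ) :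
    Vec F m n →ₗ[F] (Fin m → F) where
  toFun w := fun r => (fx A r w).coeff (k - t)
  map_add' v w := by ext; simp
  map_smul' c w := by ext; simp

/-- The coefficients of `u^(-t)` in `q`, with `u = T⁻¹`: the leading ones when
`w ∈ H A k t L`. -/
def leadY (t : ℤ) : Vec F m n →ₗ[F] (Fin n → F) where
  toFun w := fun l => (pk (w (.inr l))).coeff (-t)
  map_add' v w := by ext; simp
  map_smul' c w := by ext; simp

lemma mem_H_succ_iff {w : Vec F m n} (hw : w ∈ H A k t L) :
    w ∈ H A (k + 1) t L ↔ leadX A k t w = 0 := by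
  constructor
  · intro h
    funext r
    exact h.2.1 r _ (by lia)
  · intro h
    refine ⟨hw.1, fun r j hj => ?_, hw.2.2⟩
    rcases (show j < k - t ∨ j = k - t by lia) with h1 | rfl
    · exact hw.2.1 r j h1
    · exact congrFun h r

lemma mem_H_pred_iff {w : Vec F m n} (hw : w ∈ H A k t L) :
    w ∈ H A (k - 1) (t - 1) L ↔ leadY t w = 0 := by
  constructor
  · intro h
    funext l
    exact h.2.2 l _ (by lia)
  · intro h
    refine ⟨hw.1, fun r j hj => hw.2.1 r j (by lia), fun l j hj => ?_⟩
    rcases (show j < - t ∨ j = - t by lia) with h1 | rfl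
    · exact hw.2.2 l j h1
    · exact congrFun h l

/-- Rank-nullity for a linear map restricted to a subspace. -/
lemma finrank_map_add {E E' : Type*} [AddCommGroup E] [Module F E] [AddCommGroup E'] [Module F E']
    (f : E →ₗ[F] E') {S S' : Submodule F E} [Module.Finite F S]
    (hS : ∀ w ∈ S, w ∈ S' ↔ f w = 0) (hle : S' ≤ S) :
    Module.finrank F (S.map f) + Module.finrank F S' = Module.finrank F S := by
  have h1 := (f.domRestrict S).finrank_range_add_finrank_ker
  have h2 : LinearMap.range (f.domRestrict S) = S.map f := by
    rw [LinearMap.domRestrict, LinearMap.range_comp, Submodule.range_subtype]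
  have h3 : LinearMap.ker (f.domRestrict S) = S'.comap S.subtype := by
    ext ⟨w, hw⟩
    simp [hS w hw]
  rw [h2, h3] at h1
  rw [← h1, (Submodule.comapSubtypeEquivOfLe hle).finrank_eq]

lemma finrank_map_leadX :
    Module.finrank F ((H A k t L).map (leadX A k t)) + Module.finrank F (H A (k + 1) t L)
      = Module.finrank F (H A k t L) :=
  finrank_map_add _ (fun _ hw => mem_H_succ_iff hw) (H_mono le_rfl le_rfl (by lia))

lemma finrank_map_leadY :
    Module.finrank F ((H A k t L).map (leadY t)) + Module.finrank F (H A (k - 1) (t - 1) L)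
      = Module.finrank F (H A k t L) :=
  finrank_map_add _ (fun _ hw => mem_H_pred_iff hw) (H_mono le_rfl (by lia) (by lia))

/-- The loss of degree is the dimension of a space of leading coefficients in `F^m`. -/
lemma drop_le : drop A k W ≤ m := by
  obtain ⟨t, h1, h2⟩ := ((deg_spec A (k - 1) W).and (deg_spec A k W)).exists
  have h3 := finrank_map_leadX (A := A) (k := k - 1) (t := t) (L := lat W)
  rw [sub_add_cancel] at h3
  have h4 := Submodule.finrank_le ((H A (k - 1) t (lat W)).map (leadX A (k - 1) t))
  rw [Module.finrank_fin_fun] at h4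
  rw [drop]
  lia

/-- A short vector spans a line of large degree. -/
lemma exists_line {w : Vec F m n} (hw : w ∈ H A k t ⊤) (h0 : w ≠ 0) :
    ∃ W : Submodule (KF F) (VecK F m n), Module.finrank (KF F) W = 1 ∧ -t ≤ deg A k W := by
  have h0' : incl w ≠ 0 := fun h => h0 (incl_injective (by rw [h, map_zero]))
  refine ⟨Submodule.span (KF F) {incl w}, finrank_span_singleton h0', ?_⟩
  obtain ⟨s, h1, h2⟩ := ((deg_spec A k (Submodule.span (KF F) {incl w})).and
    (eventually_ge_atTop t)).exists
  have hb : LinearIndependent F[X] (fun _ : Fin 1 => w) :=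
    LinearIndependent.of_subsingleton (0 : Fin 1) (by simpa using h0)
  have h3 := le_finrank_H hb (A := A) (k := k) (t := t)
    (L := lat (Submodule.span (KF F) {incl w}))
    (fun _ => ⟨Submodule.mem_span_singleton_self _, hw.2⟩) (s - t).toNat
  rw [show t + ((s - t).toNat : ℤ) = s by lia] at h3
  rw [finrank_span_singleton h0'] at h1
  lia

end Degree

/-! ### Counting the next digits that preserve the drop -/

section Count

variable {F}
variable {m n : ℕ}

/-- A set contained in a fibre of a surjective linear map `T : M → N` of finite spaces has at most
`#M / #N` elements. -/
lemma card_fibre {M N : Type*} [AddCommGroup M] [Module F M] [AddCommGroup N] [Module F N]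
    [Finite M] [Finite N] (T : M →ₗ[F] N) (hT : Function.Surjective T) (P : M → Prop)
    (hP : ∀ x y, P x → P y → T x = T y) : Nat.card {x // P x} * Nat.card N ≤ Nat.card M := by
  obtain ⟨s, hs⟩ := T.exists_rightInverse_of_surjective (LinearMap.range_eq_top.2 hT)
  have hs' : ∀ v, T (s v) = v := fun v => LinearMap.congr_fun hs v
  rw [← Nat.card_prod]
  refine Nat.card_le_card_of_injective (fun p : {x // P x} × N => p.1.1 + s p.2) ?_
  rintro ⟨⟨x, hx⟩, v⟩ ⟨⟨y, hy⟩, w⟩ h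
  have h1 : x + s v = y + s w := h
  have h2 := congrArg T h1
  rw [map_add, map_add, hs', hs', hP x y hx hy] at h2
  have h3 : v = w := add_left_cancel h2
  subst h3
  have h4 : x = y := add_right_cancel h1
  subst h4
  rfl

/-- The condition that `f w + X (g w)` lie in `V` for all `w ∈ S` fixes the map induced by `X` from
`g(S)` to `F^m / V`. -/
lemma card_mulVec_mem {E : Type*} [AddCommGroup E] [Module F E] (f : E →ₗ[F] (Fin m → F))
    (g : E →ₗ[F] (Fin n → F)) (S : Submodule F E) (V : Submodule F (Fin m → F)) :
    Nat.card {X : Matrix (Fin m) (Fin n) F // ∀ w ∈ S, f w + X.mulVec (g w) ∈ V} *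
      Fintype.card F ^ ((m - Module.finrank F V) * Module.finrank F (S.map g))
        ≤ Fintype.card F ^ (m * n) := by
  let T : Matrix (Fin m) (Fin n) F →ₗ[F] (S.map g →ₗ[F] ((Fin m → F) ⧸ V)) :=
    { toFun := fun X => V.mkQ ∘ₗ (Matrix.toLin' X) ∘ₗ (S.map g).subtype
      map_add' := fun X Y => by ext; simp
      map_smul' := fun c X => by ext; simp }
  have hT : Function.Surjective T := by
    intro φ
    obtain ⟨ψ, hψ⟩ := LinearMap.exists_extend φ
    obtain ⟨s, hs⟩ := V.mkQ.exists_rightInverse_of_surjective (Submodule.range_mkQ V)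
    refine ⟨LinearMap.toMatrix' (s ∘ₗ ψ), ?_⟩
    change V.mkQ ∘ₗ (Matrix.toLin' _) ∘ₗ (S.map g).subtype = φ
    rw [Matrix.toLin'_toMatrix', ← hψ, ← LinearMap.comp_assoc, ← LinearMap.comp_assoc, hs,
      LinearMap.id_comp]
  haveI : Finite (S.map g →ₗ[F] ((Fin m → F) ⧸ V)) := Module.finite_of_finite F
  have key := card_fibre T hT (fun X => ∀ w ∈ S, f w + X.mulVec (g w) ∈ V) (by
    intro X Y hX hY
    ext ⟨_, w, hw, rfl⟩
    change V.mkQ (X.mulVec (g w)) = V.mkQ (Y.mulVec (g w))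
    rw [← sub_eq_zero, ← map_sub, Submodule.mkQ_apply, Submodule.Quotient.mk_eq_zero]
    have := V.sub_mem (hX w hw) (hY w hw)
    rwa [add_sub_add_left_eq_sub] at this)
  have e1 : Nat.card (S.map g →ₗ[F] ((Fin m → F) ⧸ V))
      = Fintype.card F ^ ((m - Module.finrank F V) * Module.finrank F (S.map g)) := by
    rw [Module.natCard_eq_pow_finrank (K := F), Module.finrank_linearMap,
      Nat.card_eq_fintype_card, Submodule.finrank_quotient, Module.finrank_fin_fun, mul_comm]
  have e2 : Nat.card (Matrix (Fin m) (Fin n) F) = Fintype.card F ^ (m * n) := by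
    rw [Module.natCard_eq_pow_finrank (K := F), Module.finrank_matrix,
      Nat.card_eq_fintype_card]
    simp
  rwa [e1, e2] at key

/-- The matrix `A + X u^k`, with `u = T⁻¹`. -/
def twist (A : Matrix (Fin m) (Fin n) (LaurentSeries F)) (k : ℤ) (X : Matrix (Fin m) (Fin n) F) :
    Matrix (Fin m) (Fin n) (LaurentSeries F) := fun r l => A r l + HahnSeries.single k (X r l)

variable {A : Matrix (Fin m) (Fin n) (LaurentSeries F)} {k t : ℤ}
  {W : Submodule (KF F) (VecK F m n)} {X : Matrix (Fin m) (Fin n) F}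

lemma agree_twist : Agree A (twist A k X) k := by
  intro r l j hj
  rw [twist, HahnSeries.coeff_add, HahnSeries.coeff_single_of_ne (by lia), add_zero]

lemma leadX_twist {w : Vec F m n} :
    leadX (twist A k X) k t w = leadX A k t w + X.mulVec (leadY t w) := by
  funext r
  have key : fx (twist A k X) r w
      = fx A r w + ∑ l, HahnSeries.single k (X r l) * pk (w (.inr l)) := by
    simp only [fx_apply, twist, add_mul, Finset.sum_add_distrib]; abel
  change (fx (twist A k X) r w).coeff (k - t) = (fx A r w).coeff (k - t)
    + ∑ l, X r l * (pk (w (.inr l))).coeff (-t)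
  rw [key, HahnSeries.coeff_add, HahnSeries.coeff_sum]
  congr 1
  refine Finset.sum_congr rfl fun l _ => ?_
  rw [HahnSeries.coeff_single_mul]
  congr 2
  ring

/-- Among the `q^(mn)` ways `X` to prescribe the next digit of `A`, at most
`q^(mn - (m - a)(i - a))` leave the drop `a` of the `i`-dimensional subspace `W` unchanged:
the leading coefficients of `p + A q` are shifted by `X` times those of `q`, and have to stay
in a fixed subspace of dimension `a`, while those of `q` fill a space of dimension `i - a`. -/
lemma card_drop_eq (a i : ℕ) (ha : drop A k W = a) (hi : Module.finrank (KF F) W = i) :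
    Nat.card {X : Matrix (Fin m) (Fin n) F // drop (twist A k X) (k + 1) W = a} *
      Fintype.card F ^ ((m - a) * (i - a)) ≤ Fintype.card F ^ (m * n) := by
  have ev : ∀ᶠ t in atTop, ∀ X : Matrix (Fin m) (Fin n) F,
      (Module.finrank F (H (twist A k X) (k + 1) t (lat W)) : ℤ)
        = (i : ℤ) * (t + 1) + deg (twist A k X) (k + 1) W := by
    rw [eventually_all]
    intro X
    rw [← hi]
    exact deg_spec _ _ W
  obtain ⟨t, hX, h0, h1, h2⟩ := (ev.and ((deg_spec A k W).and
    ((tendsto_sub_one.eventually (deg_spec A k W)).and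
    (tendsto_sub_one.eventually (deg_spec A (k - 1) W))))).exists
  rw [hi] at h0 h1 h2
  rw [drop] at ha
  have hY := finrank_map_leadY (A := A) (k := k) (t := t) (L := lat W)
  have hV := finrank_map_leadX (A := A) (k := k - 1) (t := t - 1) (L := lat W)
  rw [sub_add_cancel] at hV
  have hlead : leadX A (k - 1) (t - 1) = leadX A k t := by
    refine LinearMap.ext fun w => funext fun r => ?_
    change (fx A r _).coeff _ = (fx A r _).coeff _
    congr 1
    ring
  rw [hlead] at hV
  set V := (H A (k - 1) (t - 1) (lat W)).map (leadX A k t) with hVdef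
  have dV : Module.finrank F V = a := by zify; linarith
  have dY : Module.finrank F ((H A k t (lat W)).map (leadY t)) = i - a := by
    have : (i : ℤ) * (t + 1) = i * (t - 1 + 1) + i := by ring
    lia
  have key := card_mulVec_mem (leadX A k t) (leadY t) (H A k t (lat W)) V
  rw [dV, dY] at key
  refine le_trans (Nat.mul_le_mul_right _ ?_) key
  refine Nat.card_le_card_of_injective
    (Subtype.map id fun X (hdX : drop (twist A k X) (k + 1) W = a) => ?_)
    (Subtype.map_injective _ Function.injective_id)
  intro w hw
  have hag : Agree A (twist A k X) k := agree_twist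
  have hs := finrank_map_leadX (A := twist A k X) (k := k) (t := t) (L := lat W)
  rw [← H_congr hag] at hs
  have hle : V ≤ (H A k t (lat W)).map (leadX (twist A k X) k t) := by
    rintro _ ⟨w, hw, rfl⟩
    have hw' : w ∈ H A k t (lat W) := H_mono le_rfl (by lia) (by lia) hw
    refine ⟨w, hw', ?_⟩
    rw [leadX_twist, (mem_H_pred_iff hw').1 hw, Matrix.mulVec_zero, add_zero]
  have hXX := hX X
  rw [drop, add_sub_cancel_right, ← deg_congr hag] at hdX
  have heq := Submodule.eq_of_le_of_finrank_eq hle (by rw [dV]; zify; linarith)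
  rw [id, ← leadX_twist, heq]
  exact ⟨w, hw, rfl⟩

end Count

/-! ### Scores of subspaces -/

section Score

variable {F}
variable {m n : ℕ}

/-- The concave weight `min (i / m) ((m + n - i) / n)`, vanishing at `0` and `m + n`. -/
def gam (m n : ℕ) (x : ℝ) : ℝ := min (x / m) ((m + n - x) / n)

lemma gam_concave (x y : ℝ) : gam m n (x - y) + gam m n (x + y) ≤ 2 * gam m n x := by
  have h1 : gam m n (x - y) + gam m n (x + y) ≤ 2 * (x / m) := by
    have := min_le_left ((x - y) / m) ((m + n - (x - y)) / n)
    have := min_le_left ((x + y) / m) ((m + n - (x + y)) / n)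
    have : (x - y) / m + (x + y) / m = 2 * (x / m) := by ring
    unfold gam; linarith
  have h2 : gam m n (x - y) + gam m n (x + y) ≤ 2 * ((m + n - x) / n) := by
    have := min_le_right ((x - y) / m) ((m + n - (x - y)) / n)
    have := min_le_right ((x + y) / m) ((m + n - (x + y)) / n)
    have : (m + n - (x - y)) / n + (m + n - (x + y)) / n = 2 * (((m : ℝ) + n - x) / n) := by ring
    unfold gam; linarith
  rcases min_choice (x / m) ((m + n - x) / n) with h | h
  · rw [show gam m n x = _ from h]; exact h1
  · rw [show gam m n x = _ from h]; exact h2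

lemma gam_zero : gam m n 0 = 0 := by
  rw [gam, zero_div, sub_zero, min_eq_left]; positivity

lemma gam_top : gam m n (m + n) = 0 := by
  rw [gam, sub_self, zero_div, min_eq_right]; positivity

lemma gam_eq_left (hm : 1 ≤ m) (hn : 1 ≤ n) {i : ℕ} (hi : i ≤ m) : gam m n i = i / m := by
  have : (1 : ℝ) ≤ m := by exact_mod_cast hm
  have : (1 : ℝ) ≤ n := by exact_mod_cast hn
  have : (i : ℝ) ≤ m := by exact_mod_cast hi
  rw [gam, min_eq_left]
  rw [div_le_div_iff₀ (by linarith) (by linarith)]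
  nlinarith

lemma gam_eq_right (hm : 1 ≤ m) (hn : 1 ≤ n) {i : ℕ} (hi : m ≤ i) :
    gam m n i = (m + n - i) / n := by
  have : (1 : ℝ) ≤ m := by exact_mod_cast hm
  have : (1 : ℝ) ≤ n := by exact_mod_cast hn
  have : (m : ℝ) ≤ i := by exact_mod_cast hi
  rw [gam, min_eq_right]
  rw [div_le_div_iff₀ (by linarith) (by linarith)]
  nlinarith

lemma gam_le_one (hm : 1 ≤ m) (hn : 1 ≤ n) (i : ℕ) : gam m n i ≤ 1 := by
  have : (1 : ℝ) ≤ m := by exact_mod_cast hm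
  have : (1 : ℝ) ≤ n := by exact_mod_cast hn
  rcases le_total i m with h | h
  · have : (i : ℝ) ≤ m := by exact_mod_cast h
    rw [gam_eq_left hm hn h, div_le_one (by linarith)]; exact this
  · have : (m : ℝ) ≤ i := by exact_mod_cast h
    rw [gam_eq_right hm hn h, div_le_one (by linarith)]; linarith

lemma inv_le_gam (hm : 1 ≤ m) (hn : 1 ≤ n) {i : ℕ} (h1 : 1 ≤ i) (h2 : i ≤ m + n - 1) :
    1 / ((m : ℝ) + n) ≤ gam m n i := by
  have : (1 : ℝ) ≤ m := by exact_mod_cast hm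
  have : (1 : ℝ) ≤ n := by exact_mod_cast hn
  have : (1 : ℝ) ≤ i := by exact_mod_cast h1
  have : (i : ℝ) + 1 ≤ m + n := by exact_mod_cast (show i + 1 ≤ m + n by lia)
  rw [gam, le_min_iff]
  constructor <;> rw [div_le_div_iff₀ (by linarith) (by linarith)] <;> nlinarith

lemma gam_pos (hm : 1 ≤ m) (hn : 1 ≤ n) {i : ℕ} (h1 : 1 ≤ i) (h2 : i ≤ m + n - 1) :
    0 < gam m n i := by
  refine lt_of_lt_of_le ?_ (inv_le_gam hm hn h1 h2)
  have : (1 : ℝ) ≤ m := by exact_mod_cast hm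
  positivity

/-- The inequality behind the exponent `mn / (m + n)`. -/
lemma numeric (hm : 1 ≤ m) (hn : 1 ≤ n) {i : ℕ} (h1 : 1 ≤ i) (h2 : i ≤ m + n - 1) {a : ℕ}
    (hai : a ≤ i) (ham : a ≤ m) :
    (m : ℝ) * n / (m + n) ≤
      ((m - a) * (i - a) : ℝ) - (i * m / (m + n) - a) / gam m n i := by
  have hm' : (1 : ℝ) ≤ m := by exact_mod_cast hm
  have hn' : (1 : ℝ) ≤ n := by exact_mod_cast hn
  have hi' : (1 : ℝ) ≤ i := by exact_mod_cast h1
  have hai' : (a : ℝ) ≤ i := by exact_mod_cast hai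
  have ham' : (a : ℝ) ≤ m := by exact_mod_cast ham
  rcases le_total i m with h | h
  · rw [gam_eq_left hm hn h]
    have h' : (i : ℝ) ≤ m := by exact_mod_cast h
    have e : ((m - a) * (i - a) : ℝ) - (i * m / (m + n) - a) / (i / m) - (m : ℝ) * n / (m + n)
        = (i - a) * (m * (i - 1) - i * a) / i := by
      field_simp; ring
    have : 0 ≤ ((i : ℝ) - a) * (m * (i - 1) - i * a) := by
      rcases hai.eq_or_lt with rfl | hlt
      · simp
      · have : (a : ℝ) + 1 ≤ i := by exact_mod_cast hlt
        refine mul_nonneg (by linarith) ?_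
        nlinarith
    have : 0 ≤ (i - a) * (m * (i - 1) - i * a) / (i : ℝ) := by positivity
    linarith
  · rw [gam_eq_right hm hn h]
    have h' : (m : ℝ) ≤ i := by exact_mod_cast h
    have h3 : (i : ℝ) + 1 ≤ m + n := by exact_mod_cast (show i + 1 ≤ m + n by lia)
    have h4 : 0 < (m : ℝ) + n - i := by linarith
    have e : ((m - a) * (i - a) : ℝ) - (i * m / (m + n) - a) / ((m + n - i) / n)
        - (m : ℝ) * n / (m + n) = (m - a) * ((i - a) * (m + n - i) - n) / (m + n - i) := by
      field_simp; ring
    have : 0 ≤ ((m : ℝ) - a) * ((i - a) * (m + n - i) - n) := by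
      rcases ham.eq_or_lt with rfl | hlt
      · simp
      · have : (a : ℝ) + 1 ≤ m := by exact_mod_cast hlt
        refine mul_nonneg (by linarith) ?_
        nlinarith
    have : 0 ≤ ((m : ℝ) - a) * ((i - a) * (m + n - i) - n) / (m + n - i) := by positivity
    linarith

/-- The degree of `W`, renormalised so as to be at most `0` for the full space. -/
def phi (A : Matrix (Fin m) (Fin n) (LaurentSeries F)) (k : ℤ)
    (W : Submodule (KF F) (VecK F m n)) : ℝ :=
  deg A k W + Module.finrank (KF F) W * m * k / (m + n)

/-- The renormalised degree of `W`, corrected by a large multiple `E` of a strictly concave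
function of the dimension and by a multiple `D` of the drop. -/
def score (D E : ℝ) (A : Matrix (Fin m) (Fin n) (LaurentSeries F)) (k : ℤ)
    (W : Submodule (KF F) (VecK F m n)) : ℝ :=
  (phi A k W - E * (Module.finrank (KF F) W * (m + n - Module.finrank (KF F) W)))
    / gam m n (Module.finrank (KF F) W) - D * drop A k W

variable {A A' : Matrix (Fin m) (Fin n) (LaurentSeries F)} {k t : ℤ} {D E : ℝ}
  {W W' : Submodule (KF F) (VecK F m n)} {X : Matrix (Fin m) (Fin n) F} {i : ℕ}

lemma drop_congr (h : Agree A A' k) : drop A k W = drop A' k W := by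
  rw [drop, drop, deg_congr h, deg_congr (h.mono (by lia))]

lemma score_congr (h : Agree A A' k) : score D E A k W = score D E A' k W := by
  rw [score, score, phi, phi, deg_congr h, drop_congr h]

lemma phi_submodular : phi A k W + phi A k W' ≤ phi A k (W ⊔ W') + phi A k (W ⊓ W') := by
  have h1 : (deg A k W : ℝ) + deg A k W' ≤ deg A k (W ⊔ W') + deg A k (W ⊓ W') := by
    exact_mod_cast deg_submodular
  have h2 : (Module.finrank (KF F) ↥(W ⊔ W') : ℝ) + Module.finrank (KF F) ↥(W ⊓ W')
      = Module.finrank (KF F) W + Module.finrank (KF F) W' := by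
    exact_mod_cast Submodule.finrank_sup_add_finrank_inf_eq W W'
  have h3 : (Module.finrank (KF F) ↥(W ⊔ W') : ℝ) * m * k / (m + n)
      + Module.finrank (KF F) ↥(W ⊓ W') * m * k / (m + n)
      = Module.finrank (KF F) W * m * k / (m + n) + Module.finrank (KF F) W' * m * k / (m + n) := by
    rw [← add_div, ← add_div, ← add_mul, ← add_mul, ← add_mul, ← add_mul, h2]
  unfold phi
  linarith

lemma phi_top_le (hm : 1 ≤ m) : phi A k (⊤ : Submodule (KF F) (VecK F m n)) ≤ 0 := by
  have h1 : (deg A k (⊤ : Submodule (KF F) (VecK F m n)) : ℝ) ≤ -(m * k) := by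
    exact_mod_cast deg_top_le
  have hm' : (1 : ℝ) ≤ m := by exact_mod_cast hm
  have h2 : ((m : ℝ) + n) * m * k / (m + n) = m * k := by field_simp
  rw [phi, finrank_top, finrank_VecK]
  push_cast
  linarith

lemma phi_bot : phi A k (⊥ : Submodule (KF F) (VecK F m n)) = 0 := by
  rw [phi, deg_bot, finrank_bot]; simp

lemma drop_le_real : (drop A k W : ℝ) ≤ m := by exact_mod_cast drop_le

lemma drop_nonneg_real : (0 : ℝ) ≤ drop A k W := by exact_mod_cast drop_nonneg

lemma phi_eq (hm : 1 ≤ m) (hn : 1 ≤ n) (h1 : 1 ≤ Module.finrank (KF F) W)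
    (h2 : Module.finrank (KF F) W ≤ m + n - 1) :
    phi A k W = gam m n (Module.finrank (KF F) W) * (score D E A k W + D * drop A k W)
      + E * (Module.finrank (KF F) W * (m + n - Module.finrank (KF F) W)) := by
  have := gam_pos hm hn h1 h2
  rw [score]
  field_simp
  ring

/-- A bound on the scores bounds the degree of every subspace, including `⊥` and `⊤`. -/
lemma phi_le (hm : 1 ≤ m) (hn : 1 ≤ n) (hD : 0 ≤ D) {S : ℝ}
    (hS : ∀ W : Submodule (KF F) (VecK F m n), 1 ≤ Module.finrank (KF F) W →
      Module.finrank (KF F) W ≤ m + n - 1 → score D E A k W ≤ S)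
    (W : Submodule (KF F) (VecK F m n)) :
    phi A k W ≤ gam m n (Module.finrank (KF F) W) * (S + D * m)
      + E * (Module.finrank (KF F) W * (m + n - Module.finrank (KF F) W)) := by
  have hle := Submodule.finrank_le W
  rw [finrank_VecK] at hle
  rcases Nat.eq_zero_or_pos (Module.finrank (KF F) W) with h0 | h1
  · have : W = ⊥ := Submodule.finrank_eq_zero.1 h0
    rw [h0, this, phi_bot]
    simp [gam_zero]
  rcases hle.eq_or_lt with h2 | h2
  · have : W = ⊤ := Submodule.eq_top_of_finrank_eq (by rw [h2, finrank_VecK])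
    rw [h2, this]
    refine (phi_top_le hm).trans (le_of_eq ?_)
    push_cast
    rw [gam_top]; ring
  · have h3 : Module.finrank (KF F) W ≤ m + n - 1 := by lia
    rw [phi_eq (D := D) (E := E) hm hn h1 h3]
    have := hS W h1 h3
    have := gam_pos hm hn h1 h3
    have : D * drop A k W ≤ D * m := mul_le_mul_of_nonneg_left drop_le_real hD
    gcongr

/-- Two different subspaces of the same dimension whose scores nearly reach the maximum for this
dimension force this maximum to be far below the overall maximum. -/
lemma score_gap (hm : 1 ≤ m) (hn : 1 ≤ n) (hD : 0 ≤ D) (hE : 0 ≤ E) {S s B : ℝ}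
    (hS0 : 0 ≤ S)
    (hS : ∀ W : Submodule (KF F) (VecK F m n), 1 ≤ Module.finrank (KF F) W →
      Module.finrank (KF F) W ≤ m + n - 1 → score D E A k W ≤ S)
    (h1 : 1 ≤ i) (h2 : i ≤ m + n - 1) (hW : Module.finrank (KF F) W = i)
    (hW' : Module.finrank (KF F) W' = i) (hne : W' ≠ W) (hs : s ≤ score D E A k W)
    (hs' : s - B ≤ score D E A k W') : s ≤ S + D * m + B / 2 - E := by
  have g0 := gam_pos hm hn h1 h2
  have g1 := gam_le_one hm hn i
  obtain ⟨j, hj, hsup⟩ : ∃ j : ℕ, 1 ≤ j ∧ Module.finrank (KF F) ↥(W ⊔ W') = i + j := by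
    have hlt : W < W ⊔ W' := by
      refine lt_of_le_of_ne le_sup_left fun h => hne ?_
      exact Submodule.eq_of_le_of_finrank_eq (left_eq_sup.1 h) (hW'.trans hW.symm)
    have := Submodule.finrank_lt_finrank_of_lt hlt
    exact ⟨Module.finrank (KF F) ↥(W ⊔ W') - i, by lia, by lia⟩
  have hinf : (Module.finrank (KF F) ↥(W ⊓ W') : ℝ) = i - j := by
    have := Submodule.finrank_sup_add_finrank_inf_eq W W'
    rw [eq_sub_iff_add_eq]
    exact_mod_cast (show Module.finrank (KF F) ↥(W ⊓ W') + j = i by lia)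
  have e1 := phi_eq (A := A) (k := k) (W := W) (D := D) (E := E) hm hn (by lia) (by lia)
  have e2 := phi_eq (A := A) (k := k) (W := W') (D := D) (E := E) hm hn (by lia) (by lia)
  have e3 := phi_le hm hn hD hS (W ⊔ W')
  have e4 := phi_le hm hn hD hS (W ⊓ W')
  have e5 := phi_submodular (A := A) (k := k) (W := W) (W' := W')
  rw [hW] at e1
  rw [hW'] at e2
  rw [hsup] at e3
  rw [hinf] at e4
  push_cast at e3
  have f1 : gam m n i * s ≤ gam m n i * (score D E A k W + D * drop A k W) := by
    have := mul_nonneg hD (drop_nonneg_real (A := A) (k := k) (W := W))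
    gcongr; linarith
  have f2 : gam m n i * (s - B) ≤ gam m n i * (score D E A k W' + D * drop A k W') := by
    have := mul_nonneg hD (drop_nonneg_real (A := A) (k := k) (W := W'))
    gcongr; linarith
  have f3 := mul_le_mul_of_nonneg_right (gam_concave (m := m) (n := n) (i : ℝ) j)
    (show 0 ≤ S + D * m by positivity)
  have hj' : (1 : ℝ) ≤ j := by exact_mod_cast hj
  -- The term `E x (m + n - x)` loses `2 E j ^ 2 ≥ 2 E` in total from `i`, `i` to `i - j`, `i + j`.
  have f4 : E * gam m n i ≤ E * (j * j) := by gcongr; nlinarith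
  have f5 : gam m n i * s ≤ gam m n i * (S + D * m + B / 2 - E) := by nlinarith
  exact le_of_mul_le_mul_left f5 g0

lemma deg_twist : deg (twist A k X) (k + 1) W = deg A k W - drop (twist A k X) (k + 1) W := by
  rw [drop, add_sub_cancel_right, deg_congr (agree_twist (A := A) (X := X))]; ring

lemma drop_le_drop_twist : drop A k W ≤ drop (twist A k X) (k + 1) W := by
  rw [drop_congr (agree_twist (A := A) (X := X))]
  exact drop_mono

lemma score_twist (hm : 1 ≤ m) (hn : 1 ≤ n) (hW : Module.finrank (KF F) W = i)
    (h1 : 1 ≤ i) (h2 : i ≤ m + n - 1) :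
    score D E (twist A k X) (k + 1) W = score D E A k W
      + (i * m / (m + n) - drop (twist A k X) (k + 1) W) / gam m n i
      - D * (drop (twist A k X) (k + 1) W - drop A k W) := by
  have := gam_pos hm hn h1 h2
  rw [score, score, phi, phi, deg_twist, hW]
  push_cast
  have : (m : ℝ) + n ≠ 0 := by
    have : (1 : ℝ) ≤ m := by exact_mod_cast hm
    positivity
  field_simp
  ring

lemma main_div_le (hm : 1 ≤ m) (hn : 1 ≤ n) (h1 : 1 ≤ i) (h2 : i ≤ m + n - 1) {x : ℝ}
    (hx : 0 ≤ x) : x / gam m n i ≤ x * (m + n) := by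
  have g := inv_le_gam hm hn h1 h2
  have g0 := gam_pos hm hn h1 h2
  have hm' : (1 : ℝ) ≤ m := by exact_mod_cast hm
  rw [div_le_iff₀ (by positivity)] at g
  rw [div_le_iff₀ g0]
  nlinarith

lemma score_twist_le (hm : 1 ≤ m) (hn : 1 ≤ n) (hD : 0 ≤ D) (hW : Module.finrank (KF F) W = i)
    (h1 : 1 ≤ i) (h2 : i ≤ m + n - 1) :
    score D E (twist A k X) (k + 1) W ≤ score D E A k W + (i * m / (m + n)) / gam m n i := by
  rw [score_twist hm hn hW h1 h2, sub_div]
  have g0 := gam_pos hm hn h1 h2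
  have e1 : (0 : ℝ) ≤ drop (twist A k X) (k + 1) W / gam m n i :=
    div_nonneg drop_nonneg_real g0.le
  have e2 : (drop A k W : ℝ) ≤ drop (twist A k X) (k + 1) W := by
    exact_mod_cast drop_le_drop_twist
  nlinarith

lemma growth_le (hm : 1 ≤ m) (hn : 1 ≤ n) (h1 : 1 ≤ i) (h2 : i ≤ m + n - 1) :
    ((i : ℝ) * m / (m + n)) / gam m n i ≤ ((m : ℝ) + n) ^ 2 := by
  have hm' : (1 : ℝ) ≤ m := by exact_mod_cast hm
  have hi : (i : ℝ) ≤ m + n := by exact_mod_cast (show i ≤ m + n by lia)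
  refine (main_div_le hm hn h1 h2 (by positivity)).trans ?_
  rw [div_mul_cancel₀ _ (by positivity)]
  nlinarith [Nat.cast_nonneg (α := ℝ) n, Nat.cast_nonneg (α := ℝ) i]

lemma le_score_twist (hm : 1 ≤ m) (hn : 1 ≤ n) (hD : 0 ≤ D) (hW : Module.finrank (KF F) W = i)
    (h1 : 1 ≤ i) (h2 : i ≤ m + n - 1) :
    score D E A k W + (i * m / (m + n)) / gam m n i - ((m + n) * m + D * m)
      ≤ score D E (twist A k X) (k + 1) W := by
  rw [score_twist hm hn hW h1 h2, sub_div]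
  have e1 := main_div_le hm hn h1 h2 (x := (drop (twist A k X) (k + 1) W : ℝ)) drop_nonneg_real
  have e2 := drop_nonneg_real (A := A) (k := k) (W := W)
  have e3 := drop_le_real (A := twist A k X) (k := k + 1) (W := W)
  have e4 : D * (drop (twist A k X) (k + 1) W - drop A k W) ≤ D * m := by gcongr; linarith
  have e5 : (drop (twist A k X) (k + 1) W : ℝ) * (m + n) ≤ m * (m + n) := by gcongr
  linarith

end Score

/-! ### The height function and its contraction on average -/

section Height

variable {F}
variable {m n : ℕ}

variable {A A' : Matrix (Fin m) (Fin n) (LaurentSeries F)} {k t : ℤ} {D E : ℝ}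
  {W W' : Submodule (KF F) (VecK F m n)} {X : Matrix (Fin m) (Fin n) F} {i : ℕ}

lemma exists_finrank_eq (hi : i ≤ m + n) :
    ∃ W : Submodule (KF F) (VecK F m n), Module.finrank (KF F) W = i := by
  obtain ⟨f, hf⟩ := exists_linearIndependent_of_le_finrank (R := KF F) (M := VecK F m n)
    (n := i) (by rw [finrank_VecK]; exact hi)
  exact ⟨Submodule.span (KF F) (Set.range f), by
    rw [finrank_span_eq_card hf, Fintype.card_fin]⟩

/-- The largest score in a given dimension is attained: the degree and the drop are integers bounded
above, and the drop is also bounded below. -/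
lemma exists_best (hm : 1 ≤ m) (hn : 1 ≤ n) (hD : 0 ≤ D) (hk : 0 ≤ k) (h1 : 1 ≤ i)
    (h2 : i ≤ m + n - 1) : ∃ W : Submodule (KF F) (VecK F m n), Module.finrank (KF F) W = i ∧
      ∀ W' : Submodule (KF F) (VecK F m n), Module.finrank (KF F) W' = i →
        score D E A k W' ≤ score D E A k W := by
  obtain ⟨W₀, hW₀⟩ := exists_finrank_eq (F := F) (show i ≤ m + n by lia)
  have g0 := gam_pos hm hn h1 h2
  set c : ℝ := i * m * k / (m + n) - E * (i * (m + n - i)) with hc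
  have hscore : ∀ W : Submodule (KF F) (VecK F m n), Module.finrank (KF F) W = i →
      score D E A k W = (deg A k W + c) / gam m n i - D * drop A k W := by
    intro W hW
    rw [score, phi, hW, hc]
    ring
  set R : Set (Submodule (KF F) (VecK F m n)) :=
    {W | Module.finrank (KF F) W = i ∧ score D E A k W₀ ≤ score D E A k W} with hR
  have hfin : (score D E A k '' R).Finite := by
    refine (((Set.finite_Icc (-⌈c - gam m n i * score D E A k W₀⌉) 0).prod
      (Set.finite_Icc 0 (m : ℤ))).image
      (fun p : ℤ × ℤ => (p.1 + c) / gam m n i - D * p.2)).subset ?_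
    rintro _ ⟨W, ⟨hW, hW'⟩, rfl⟩
    refine ⟨(deg A k W, drop A k W), ⟨⟨?_, deg_nonpos hk⟩, drop_nonneg, drop_le⟩,
      (hscore W hW).symm⟩
    rw [neg_le, Int.le_ceil_iff]
    have e1 := mul_nonneg hD (drop_nonneg_real (A := A) (k := k) (W := W))
    have e2 : score D E A k W₀ ≤ (deg A k W + c) / gam m n i := by
      rw [hscore W hW] at hW'; linarith
    rw [le_div_iff₀ g0] at e2
    push_cast
    linarith
  obtain ⟨_, ⟨W, ⟨hW, -⟩, rfl⟩, hmax⟩ := Set.exists_max_image _ id hfin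
    ⟨_, W₀, ⟨hW₀, le_rfl⟩, rfl⟩
  refine ⟨W, hW, fun W' hW' => ?_⟩
  rcases le_total (score D E A k W₀) (score D E A k W') with h | h
  · exact hmax _ ⟨W', ⟨hW', h⟩, rfl⟩
  · exact h.trans (hmax _ ⟨W₀, ⟨hW₀, le_rfl⟩, rfl⟩)

/-- The largest score of an `i`-dimensional subspace. -/
def best (D E : ℝ) (A : Matrix (Fin m) (Fin n) (LaurentSeries F)) (k : ℤ) (i : ℕ) : ℝ :=
  ⨆ W : {W : Submodule (KF F) (VecK F m n) // Module.finrank (KF F) W = i}, score D E A k W.1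

lemma best_spec (hm : 1 ≤ m) (hn : 1 ≤ n) (hD : 0 ≤ D) (hk : 0 ≤ k) (h1 : 1 ≤ i)
    (h2 : i ≤ m + n - 1) : ∃ W : Submodule (KF F) (VecK F m n), Module.finrank (KF F) W = i ∧
      best D E A k i = score D E A k W := by
  obtain ⟨W, hW, hmax⟩ := exists_best (A := A) (E := E) hm hn hD hk h1 h2
  refine ⟨W, hW, le_antisymm ?_ ?_⟩
  · haveI : Nonempty {W : Submodule (KF F) (VecK F m n) // Module.finrank (KF F) W = i} :=
      ⟨⟨W, hW⟩⟩
    exact ciSup_le fun W' => hmax _ W'.2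
  · exact le_ciSup (f := fun W : {W : Submodule (KF F) (VecK F m n) // Module.finrank (KF F) W = i}
      => score D E A k W.1) ⟨score D E A k W, by rintro _ ⟨W', rfl⟩; exact hmax _ W'.2⟩ ⟨W, hW⟩

lemma le_best (hm : 1 ≤ m) (hn : 1 ≤ n) (hD : 0 ≤ D) (hk : 0 ≤ k) (h1 : 1 ≤ i)
    (h2 : i ≤ m + n - 1) (hW : Module.finrank (KF F) W = i) :
    score D E A k W ≤ best D E A k i := by
  obtain ⟨W₁, -, hmax⟩ := exists_best (A := A) (E := E) hm hn hD hk h1 h2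
  exact le_ciSup (f := fun W : {W : Submodule (KF F) (VecK F m n) // Module.finrank (KF F) W = i}
    => score D E A k W.1) ⟨score D E A k W₁, by rintro _ ⟨W', rfl⟩; exact hmax _ W'.2⟩ ⟨W, hW⟩

lemma best_congr (h : Agree A A' k) : best D E A k i = best D E A' k i := by
  unfold best
  exact iSup_congr fun W => score_congr h

/-- The height function, which contracts on average while it is large. -/
def height (D E : ℝ) (A : Matrix (Fin m) (Fin n) (LaurentSeries F)) (k : ℤ) : ℝ :=
  ∑ i ∈ Finset.Icc 1 (m + n - 1), (Fintype.card F : ℝ) ^ best D E A k i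

/-- The lattice of `A` at time `k` has a subspace of nonnegative score, of dimension strictly between
`0` and `m + n`. -/
def High (D E : ℝ) (A : Matrix (Fin m) (Fin n) (LaurentSeries F)) (k : ℤ) : Prop :=
  ∃ i ∈ Finset.Icc 1 (m + n - 1), 0 ≤ best D E A k i

lemma height_congr (h : Agree A A' k) : height D E A k = height D E A' k := by
  simp only [height, best_congr h]

lemma high_congr (h : Agree A A' k) : High D E A k ↔ High D E A' k := by
  simp only [High, best_congr h]

lemma card_pos_real : (0 : ℝ) < Fintype.card F := by exact_mod_cast Fintype.card_pos

lemma one_le_card : (1 : ℝ) ≤ Fintype.card F := by exact_mod_cast Fintype.card_pos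

lemma one_lt_card : (1 : ℝ) < Fintype.card F := by exact_mod_cast Fintype.one_lt_card

lemma height_nonneg : 0 ≤ height D E A k :=
  Finset.sum_nonneg fun _ _ => (Real.rpow_pos_of_pos card_pos_real _).le

lemma rpow_best_le_height (hi : i ∈ Finset.Icc 1 (m + n - 1)) :
    (Fintype.card F : ℝ) ^ best D E A k i ≤ height D E A k :=
  Finset.single_le_sum (f := fun i => (Fintype.card F : ℝ) ^ best D E A k i)
    (fun _ _ => (Real.rpow_pos_of_pos card_pos_real _).le) hi

lemma one_le_height (h : High D E A k) : 1 ≤ height D E A k := by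
  obtain ⟨i, hi, h0⟩ := h
  exact (Real.one_le_rpow one_le_card h0).trans (rpow_best_le_height hi)

lemma card_matrix_real :
    (Fintype.card (Matrix (Fin m) (Fin n) F) : ℝ) = (Fintype.card F : ℝ) ^ ((m : ℝ) * n) := by
  have h : Fintype.card (Matrix (Fin m) (Fin n) F) = Fintype.card F ^ (m * n) := by
    rw [← Nat.card_eq_fintype_card, Module.natCard_eq_pow_finrank (K := F),
      Module.finrank_matrix, Nat.card_eq_fintype_card]
    simp
  rw [h]
  push_cast
  rw [← Real.rpow_natCast]
  push_cast
  rfl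

/-- The count of `card_drop_eq`, in terms of real exponents. -/
lemma card_drop_eq_real (hW : Module.finrank (KF F) W = i) {a : ℕ} (ha : drop A k W = a)
    (hai : a ≤ i) (ham : a ≤ m) :
    ((Finset.univ.filter fun X : Matrix (Fin m) (Fin n) F =>
      drop (twist A k X) (k + 1) W = a).card : ℝ)
      ≤ (Fintype.card F : ℝ) ^ ((m : ℝ) * n - (m - a) * (i - a)) := by
  have h := card_drop_eq a i ha hW
  rw [Nat.card_eq_fintype_card, Fintype.card_subtype] at h
  rw [Real.rpow_sub card_pos_real, le_div_iff₀ (Real.rpow_pos_of_pos card_pos_real _)]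
  have e1 : ((m : ℝ) - a) * (i - a) = (((m - a) * (i - a) : ℕ) : ℝ) := by
    push_cast [ham, hai]; ring
  rw [e1, show (m : ℝ) * n = ((m * n : ℕ) : ℝ) by push_cast; rfl, Real.rpow_natCast,
    Real.rpow_natCast]
  exact_mod_cast h

/-- Contraction for the terms of dimension `i`. If the best subspace is much better than the
others, it stays the best one, and its score decreases on average because its drop increases for
most digits; otherwise the whole term is negligible. -/
lemma sum_best_le (hm : 1 ≤ m) (hn : 1 ≤ n) (hk : 0 ≤ k) {B c : ℝ} (hc : 0 ≤ c)
    (hD : ((m : ℝ) + n) ^ 2 + c ≤ D) (hB : ((m : ℝ) + n) * m + D * m ≤ B)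
    (hE : D * m + B / 2 + c + ((m : ℝ) + n) ^ 2 ≤ E) (hi : i ∈ Finset.Icc 1 (m + n - 1))
    (hA : High D E A k) :
    ∑ X : Matrix (Fin m) (Fin n) F, (Fintype.card F : ℝ) ^ best D E (twist A k X) (k + 1) i
      ≤ (Fintype.card F : ℝ) ^ ((m : ℝ) * n - m * n / (m + n))
          * (Fintype.card F : ℝ) ^ best D E A k i
        + (Fintype.card F : ℝ) ^ ((m : ℝ) * n - c) * height D E A k := by
  obtain ⟨h1, h2⟩ := Finset.mem_Icc.1 hi
  have hD0 : 0 ≤ D := le_trans (by positivity) hD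
  have hB0 : 0 ≤ B := le_trans (by positivity) hB
  have hE0 : 0 ≤ E := le_trans (by positivity) hE
  have q1 := one_le_card (F := F)
  have q0 := card_pos_real (F := F)
  obtain ⟨W, hW, hbest⟩ := best_spec (A := A) (E := E) hm hn hD0 hk h1 h2
  have hgrow := growth_le hm hn h1 h2
  have hheight := height_nonneg (D := D) (E := E) (A := A) (k := k)
  by_cases huniq : ∀ W' : Submodule (KF F) (VecK F m n), Module.finrank (KF F) W' = i → W' ≠ W →
      score D E A k W' < score D E A k W - B
  · -- One step changes score differences by at most `B`, so `W` stays the best subspace.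
    have hstay : ∀ X : Matrix (Fin m) (Fin n) F,
        best D E (twist A k X) (k + 1) i = score D E (twist A k X) (k + 1) W := by
      intro X
      obtain ⟨W', hW', hb'⟩ := best_spec (A := twist A k X) (E := E) hm hn hD0
        (show 0 ≤ k + 1 by lia) h1 h2
      rw [hb']
      by_contra hne
      have hne' : W' ≠ W := fun h => hne (by rw [h])
      have e1 := huniq W' hW' hne'
      have e2 := score_twist_le (A := A) (k := k) (E := E) (X := X) hm hn hD0 hW' h1 h2
      have e3 := le_score_twist (A := A) (k := k) (E := E) (X := X) hm hn hD0 hW h1 h2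
      have e4 := le_best (A := twist A k X) (E := E) hm hn hD0 (show 0 ≤ k + 1 by lia) h1 h2 hW
      rw [hb'] at e4
      linarith
    obtain ⟨a, ha⟩ := Int.eq_ofNat_of_zero_le (drop_nonneg (A := A) (k := k) (W := W))
    have ham : a ≤ m := by have := drop_le (A := A) (k := k) (W := W); lia
    have hai : a ≤ i := by
      have := drop_le_finrank (A := A) (k := k - 1) (W := W)
      rw [sub_add_cancel, hW, ha] at this
      exact_mod_cast this
    have hcount := card_drop_eq_real hW ha hai ham
    have hnum := numeric hm hn h1 h2 hai ham
    have hpt : ∀ X : Matrix (Fin m) (Fin n) F,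
        (Fintype.card F : ℝ) ^ best D E (twist A k X) (k + 1) i ≤
          (if drop (twist A k X) (k + 1) W = a then
            (Fintype.card F : ℝ) ^ (best D E A k i + (i * m / (m + n) - a) / gam m n i) else 0)
          + (Fintype.card F : ℝ) ^ (best D E A k i - c) := by
      intro X
      rw [hstay X, hbest]
      split_ifs with hd
      · refine le_add_of_le_of_nonneg (le_of_eq ?_) (Real.rpow_pos_of_pos q0 _).le
        rw [score_twist hm hn hW h1 h2, hd, ha]
        simp
      · rw [zero_add]
        refine Real.rpow_le_rpow_of_exponent_le q1 ?_
        rw [score_twist hm hn hW h1 h2, sub_div]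
        have e1 : (drop A k W : ℝ) + 1 ≤ drop (twist A k X) (k + 1) W := by
          have := drop_le_drop_twist (A := A) (k := k) (W := W) (X := X)
          exact_mod_cast (show drop A k W + 1 ≤ _ by lia)
        have e2 : (0 : ℝ) ≤ drop (twist A k X) (k + 1) W / gam m n i :=
          div_nonneg drop_nonneg_real (gam_pos hm hn h1 h2).le
        nlinarith
    refine (Finset.sum_le_sum fun X _ => hpt X).trans ?_
    rw [Finset.sum_add_distrib, ← Finset.sum_filter, Finset.sum_const, Finset.sum_const,
      nsmul_eq_mul, nsmul_eq_mul, Finset.card_univ, card_matrix_real]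
    refine add_le_add ?_ ?_
    · refine (mul_le_mul_of_nonneg_right hcount (Real.rpow_pos_of_pos q0 _).le).trans ?_
      rw [← Real.rpow_add q0, ← Real.rpow_add q0]
      refine Real.rpow_le_rpow_of_exponent_le q1 ?_
      linarith
    · refine le_trans (le_of_eq ?_) (mul_le_mul_of_nonneg_left
        (rpow_best_le_height (A := A) (k := k) (D := D) (E := E) hi)
        (Real.rpow_pos_of_pos q0 _).le)
      rw [← Real.rpow_add q0, ← Real.rpow_add q0]
      congr 1
      ring
  · -- Two subspaces within `B` of each other: `score_gap` puts both far below the maximum.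
    push Not at huniq
    obtain ⟨W', hW', hne, hs'⟩ := huniq
    -- The overall maximum is nonnegative because `A` is high.
    obtain ⟨i₀, hi₀, hmax⟩ := Finset.exists_max_image (Finset.Icc 1 (m + n - 1))
      (best D E A k) ⟨i, hi⟩
    have hS0 : 0 ≤ best D E A k i₀ := by
      obtain ⟨j, hj, h0⟩ := hA
      exact h0.trans (hmax j hj)
    have hS : ∀ W : Submodule (KF F) (VecK F m n), 1 ≤ Module.finrank (KF F) W →
        Module.finrank (KF F) W ≤ m + n - 1 → score D E A k W ≤ best D E A k i₀ :=
      fun W g1 g2 => (le_best hm hn hD0 hk g1 g2 rfl).trans (hmax _ (Finset.mem_Icc.2 ⟨g1, g2⟩))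
    have hgap := score_gap hm hn hD0 hE0 hS0 hS h1 h2 hW hW' hne le_rfl hs'
    have hpt : ∀ X : Matrix (Fin m) (Fin n) F,
        (Fintype.card F : ℝ) ^ best D E (twist A k X) (k + 1) i ≤
          (Fintype.card F : ℝ) ^ (best D E A k i₀ - c) := by
      intro X
      refine Real.rpow_le_rpow_of_exponent_le q1 ?_
      obtain ⟨W₁, hW₁, hb₁⟩ := best_spec (A := twist A k X) (E := E) hm hn hD0
        (show 0 ≤ k + 1 by lia) h1 h2
      have e1 := score_twist_le (A := A) (k := k) (E := E) (X := X) hm hn hD0 hW₁ h1 h2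
      have e2 := le_best (A := A) (E := E) hm hn hD0 hk h1 h2 hW₁
      rw [hb₁]
      linarith
    refine (Finset.sum_le_sum fun X _ => hpt X).trans ?_
    rw [Finset.sum_const, nsmul_eq_mul, Finset.card_univ, card_matrix_real]
    refine le_add_of_nonneg_of_le (by positivity) ?_
    refine le_trans (le_of_eq ?_) (mul_le_mul_of_nonneg_left
      (rpow_best_le_height (A := A) (k := k) (D := D) (E := E) hi₀)
      (Real.rpow_pos_of_pos q0 _).le)
    rw [← Real.rpow_add q0, ← Real.rpow_add q0]
    congr 1
    ring

/-- The contraction factor, up to the normalisation by the number `q^(mn)` of digits. -/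
def rate (F : Type*) [Fintype F] (m n : ℕ) (c : ℝ) : ℝ :=
  (Fintype.card F : ℝ) ^ ((m : ℝ) * n - m * n / (m + n))
    + (m + n) * (Fintype.card F : ℝ) ^ ((m : ℝ) * n - c)

lemma sum_height_le (hm : 1 ≤ m) (hn : 1 ≤ n) (hk : 0 ≤ k) {B c : ℝ} (hc : 0 ≤ c)
    (hD : ((m : ℝ) + n) ^ 2 + c ≤ D) (hB : ((m : ℝ) + n) * m + D * m ≤ B)
    (hE : D * m + B / 2 + c + ((m : ℝ) + n) ^ 2 ≤ E) (hA : High D E A k) :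
    ∑ X : Matrix (Fin m) (Fin n) F, height D E (twist A k X) (k + 1)
      ≤ rate F m n c * height D E A k := by
  simp only [height]
  rw [Finset.sum_comm]
  refine (Finset.sum_le_sum fun i hi => sum_best_le hm hn hk hc hD hB hE hi hA).trans ?_
  rw [Finset.sum_add_distrib, ← Finset.mul_sum, Finset.sum_const, Nat.card_Icc, nsmul_eq_mul,
    rate, add_mul]
  change _ * height D E A k + _ ≤ _ * height D E A k + _ * height D E A k
  rw [mul_assoc]
  have h := height_nonneg (D := D) (E := E) (A := A) (k := k)
  have q := Real.rpow_pos_of_pos (card_pos_real (F := F)) ((m : ℝ) * n - c)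
  gcongr
  exact_mod_cast (show m + n - 1 + 1 - 1 ≤ m + n by lia)

end Height

/-! ### Efficient covers and Hausdorff dimension -/

section Dimension

open Topology MeasureTheory
open scoped ENNReal NNReal

/-- The upper bound for the Hausdorff dimension given by covers by `O(Q^j)` sets of diameter
`O(q^(-j))`. -/
lemma dimH_le_of_covers.{u, v} {M : Type v} [MetricSpace M] (s : Set M) {q Q C e κ : ℝ}
    (hq : 1 < q) (hC : 0 ≤ C) (he : 0 ≤ e) (hQ0 : 0 ≤ Q) (hQ : Q ≤ q ^ e)
    (hcov : ∀ j : ℕ, ∃ (ι : Type u) (_ : Fintype ι) (t : ι → Set M), s ⊆ ⋃ i, t i ∧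
      (∀ i, Metric.ediam (t i) ≤ ENNReal.ofReal (q ^ (-(κ + j)))) ∧
      (Fintype.card ι : ℝ) ≤ C * Q ^ j) : dimH s ≤ ENNReal.ofReal e := by
  choose ι hι t hst hdiam hcard using hcov
  borelize M
  have q0 : 0 < q := by linarith
  have hr : Tendsto (fun j : ℕ => ENNReal.ofReal (q ^ (-(κ + j)))) atTop (𝓝 0) := by
    rw [← ENNReal.ofReal_zero]
    refine (ENNReal.continuous_ofReal.tendsto 0).comp ?_
    have h1 : Tendsto (fun j : ℕ => q ^ (-κ) * (q⁻¹) ^ j) atTop (𝓝 (q ^ (-κ) * 0)) :=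
      (tendsto_pow_atTop_nhds_zero_of_lt_one (by positivity) (inv_lt_one_of_one_lt₀ hq)).const_mul _
    rw [mul_zero] at h1
    refine h1.congr fun j => ?_
    rw [neg_add, Real.rpow_add q0, Real.rpow_neg q0.le (j : ℝ), Real.rpow_natCast, inv_pow]
  have hmeas := Measure.hausdorffMeasure_le_liminf_sum e s
    (fun j : ℕ => ENNReal.ofReal (q ^ (-(κ + j)))) hr t (Eventually.of_forall hdiam)
    (Eventually.of_forall hst)
  have hbound : ∀ j : ℕ, ∑ i, Metric.ediam (t j i) ^ e ≤ ENNReal.ofReal (C * q ^ (-(κ * e))) := by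
    intro j
    have h1 : ∀ i ∈ Finset.univ, Metric.ediam (t j i) ^ e
        ≤ ENNReal.ofReal (q ^ (-(κ + j) * e)) := by
      intro i _
      refine (ENNReal.rpow_le_rpow (hdiam j i) he).trans (le_of_eq ?_)
      rw [ENNReal.ofReal_rpow_of_pos (Real.rpow_pos_of_pos q0 _), ← Real.rpow_mul q0.le]
    refine (Finset.sum_le_sum h1).trans ?_
    rw [Finset.sum_const, nsmul_eq_mul, Finset.card_univ, ← ENNReal.ofReal_natCast,
      ← ENNReal.ofReal_mul (by positivity)]
    refine ENNReal.ofReal_le_ofReal ?_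
    calc (Fintype.card (ι j) : ℝ) * q ^ (-(κ + j) * e)
        ≤ (C * (q ^ e) ^ j) * q ^ (-(κ + j) * e) := by
          gcongr
          exact (hcard j).trans (by gcongr)
      _ = C * q ^ (-(κ * e)) := by
          rw [mul_assoc, ← Real.rpow_natCast, ← Real.rpow_mul q0.le, ← Real.rpow_add q0]
          congr 2
          ring
  have hfin : μH[e] s ≤ ENNReal.ofReal (C * q ^ (-(κ * e))) := by
    refine hmeas.trans ((liminf_le_liminf (Eventually.of_forall hbound)).trans ?_)
    rw [liminf_const]
  have := dimH_le_of_hausdorffMeasure_ne_top (s := s) (d := e.toNNReal) (by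
    rw [Real.coe_toNNReal e he]
    exact (hfin.trans_lt ENNReal.ofReal_lt_top).ne)
  exact this

variable {F}
variable {m n : ℕ}
variable {A A' Z : Matrix (Fin m) (Fin n) (LaurentSeries F)} {k t : ℤ} {D E : ℝ}

lemma absv_le_of_coeff {x : LaurentSeries F} (h : ∀ j < k, x.coeff j = 0) :
    absv F x ≤ (Fintype.card F : ℝ) ^ (-(k : ℝ)) := by
  rw [absv]
  split_ifs with h0
  · exact (Real.rpow_pos_of_pos card_pos_real _).le
  · rw [← Int.cast_neg, Real.rpow_intCast]
    refine zpow_le_zpow_right₀ one_le_card (neg_le_neg ?_)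
    by_contra! hlt
    exact h0 (HahnSeries.coeff_order_eq_zero.1 (h _ hlt))

lemma coeff_eq_zero_of_absv_le {x : LaurentSeries F} {y : ℝ}
    (h : absv F x ≤ (Fintype.card F : ℝ) ^ y) {j : ℤ} (hj : (j : ℝ) < -y) : x.coeff j = 0 := by
  rw [absv] at h
  split_ifs at h with h0
  · rw [h0]; rfl
  · rw [← Real.rpow_intCast, Real.rpow_le_rpow_left_iff one_lt_card] at h
    push_cast at h
    refine HahnSeries.coeff_eq_zero_of_lt_order ?_
    have : (j : ℝ) < x.order := by linarith
    exact_mod_cast this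

lemma dist_le_of_agree (h : Agree A A' k) : dist A A' ≤ (Fintype.card F : ℝ) ^ (-(k : ℝ)) := by
  have q0 := (Real.rpow_pos_of_pos (card_pos_real (F := F)) (-(k : ℝ))).le
  refine (dist_pi_le_iff q0).2 fun r => (dist_pi_le_iff q0).2 fun l => ?_
  refine absv_le_of_coeff fun j hj => ?_
  rw [HahnSeries.coeff_sub, h r l j hj, sub_self]

lemma agree_twist_succ (h : Agree A Z k) :
    Agree (twist A k fun r l => (Z r l).coeff k - (A r l).coeff k) Z (k + 1) := by
  intro r l j hj
  change (A r l + HahnSeries.single k ((Z r l).coeff k - (A r l).coeff k)).coeff j = _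
  rw [HahnSeries.coeff_add]
  rcases (show j < k ∨ j = k by lia) with h1 | rfl
  · rw [HahnSeries.coeff_single_of_ne (by lia), add_zero, h r l j h1]
  · rw [HahnSeries.coeff_single_same]; ring

/-- The matrices which agree with `A` up to `k` and stay high at all times from `k` on. -/
def highSet (D E : ℝ) (A : Matrix (Fin m) (Fin n) (LaurentSeries F)) (k : ℤ) :
    Set (Matrix (Fin m) (Fin n) (LaurentSeries F)) :=
  {Z | Agree A Z k ∧ ∀ j : ℕ, High D E Z (k + j)}

/-- The digit strings of length `j` along which the height stays large, with the sum of the heights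
they lead to controlled by the contraction rate. -/
lemma exists_cover.{u} {F : Type u} [Field F] [Fintype F]
    (A : Matrix (Fin m) (Fin n) (LaurentSeries F)) (k : ℤ) {Q : ℝ} (hQ0 : 0 ≤ Q)
    (hQ : ∀ (B : Matrix (Fin m) (Fin n) (LaurentSeries F)) (j : ℕ), High D E B (k + j) →
      ∑ X : Matrix (Fin m) (Fin n) F, height D E (twist B (k + j) X) (k + j + 1)
        ≤ Q * height D E B (k + j)) (j : ℕ) :
    ∃ (ι : Type u) (_ : Fintype ι) (f : ι → Matrix (Fin m) (Fin n) (LaurentSeries F)),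
      (∀ Z ∈ highSet D E A k, ∃ i, Agree (f i) Z (k + j)) ∧
      ∑ i, height D E (f i) (k + j) ≤ height D E A k * Q ^ j := by
  induction j with
  | zero =>
    refine ⟨PUnit, inferInstance, fun _ => A, fun Z hZ => ⟨⟨⟩, ?_⟩, ?_⟩
    · simpa using hZ.1
    · simp
  | succ j ih =>
    obtain ⟨ι, _, f, hf, hsum⟩ := ih
    refine ⟨{i // High D E (f i) (k + j)} × Matrix (Fin m) (Fin n) F, inferInstance,
      fun p => twist (f p.1) (k + j) p.2, fun Z hZ => ?_, ?_⟩
    · obtain ⟨i, hi⟩ := hf Z hZ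
      refine ⟨⟨⟨i, (high_congr hi).2 (hZ.2 j)⟩,
        fun r l => (Z r l).coeff (k + j) - (f i r l).coeff (k + j)⟩, ?_⟩
      push_cast
      rw [← add_assoc]
      exact agree_twist_succ hi
    · rw [Fintype.sum_prod_type]
      push_cast
      rw [← add_assoc]
      refine (Finset.sum_le_sum fun i _ => hQ (f i.1) j i.2).trans ?_
      rw [← Finset.mul_sum]
      have h1 : ∑ i : {i // High D E (f i) (k + j)}, height D E (f i) (k + j)
          ≤ ∑ i, height D E (f i) (k + j) := by
        rw [← Finset.sum_subtype (Finset.univ.filter fun i => High D E (f i) (k + j))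
          (by simp) (fun i => height D E (f i) (k + j))]
        exact Finset.sum_le_sum_of_subset_of_nonneg (Finset.filter_subset _ _)
          fun _ _ _ => height_nonneg
      calc Q * ∑ i : {i // High D E (f i) (k + j)}, height D E (f i) (k + j)
          ≤ Q * (height D E A k * Q ^ j) := by gcongr; exact h1.trans hsum
        _ = _ := by ring

/-- Heights are at least `1` on high matrices, so the contraction bounds the number of balls of
radius `q^(-k-j)` needed to cover `highSet D E A k`. -/
lemma dimH_highSet_le.{u} {F : Type u} [Field F] [Fintype F]
    (A : Matrix (Fin m) (Fin n) (LaurentSeries F)) (k : ℤ) {Q e : ℝ} (hQ0 : 0 ≤ Q)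
    (he : 0 ≤ e) (hQe : Q ≤ (Fintype.card F : ℝ) ^ e)
    (hQ : ∀ (B : Matrix (Fin m) (Fin n) (LaurentSeries F)) (j : ℕ), High D E B (k + j) →
      ∑ X : Matrix (Fin m) (Fin n) F, height D E (twist B (k + j) X) (k + j + 1)
        ≤ Q * height D E B (k + j)) :
    dimH (highSet D E A k) ≤ ENNReal.ofReal e := by
  refine dimH_le_of_covers.{u} (q := Fintype.card F) (Q := Q) (C := height D E A k) (κ := k) _
    one_lt_card height_nonneg he hQ0 hQe fun j => ?_
  obtain ⟨ι, _, f, hf, hsum⟩ := exists_cover A k hQ0 hQ j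
  refine ⟨{i // High D E (f i) (k + j)}, inferInstance, fun i => {Z | Agree (f i) Z (k + j)},
    fun Z hZ => ?_, fun i => ?_, le_trans ?_ hsum⟩
  · obtain ⟨i, hi⟩ := hf Z hZ
    exact Set.mem_iUnion.2 ⟨⟨i, (high_congr hi).2 (hZ.2 j)⟩, hi⟩
  · refine Metric.ediam_le_of_forall_dist_le fun Z hZ Z' hZ' => ?_
    have := dist_le_of_agree ((Agree.symm hZ).trans hZ')
    push_cast at this
    exact this
  · rw [Fintype.card_subtype, Finset.card_eq_sum_ones]
    push_cast
    refine (Finset.sum_le_sum (s := Finset.univ.filter fun i => High D E (f i) (k + j))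
      (g := fun i => height D E (f i) (k + j)) fun i hi =>
        one_le_height (Finset.mem_filter.1 hi).2).trans ?_
    exact Finset.sum_le_sum_of_subset_of_nonneg (Finset.filter_subset _ _)
      fun _ _ _ => height_nonneg

/-- Polynomials in `T`, shifted, give representatives of all Laurent series modulo `u^k`. -/
lemma exists_poly (x : LaurentSeries F) (k : ℤ) :
    ∃ c : F[X], ∀ j < k, (HahnSeries.single (k - 1) (1 : F) * pk c).coeff j = x.coeff j := by
  refine ⟨∑ i ∈ Finset.range (k - x.order).toNat, monomial i (x.coeff (k - 1 - i)),
    fun j hj => ?_⟩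
  obtain ⟨i, hi⟩ := Int.eq_ofNat_of_zero_le (show 0 ≤ k - 1 - j by lia)
  rw [HahnSeries.coeff_single_mul, one_mul, show j - (k - 1) = -(i : ℤ) by lia, coeff_pk,
    finsetSum_coeff]
  simp only [coeff_monomial]
  rw [Finset.sum_ite_eq']
  split_ifs with h
  · congr 1; lia
  · rw [Finset.mem_range] at h
    exact (HahnSeries.coeff_eq_zero_of_lt_order (by lia)).symm

/-- The condition at times from `k` on decomposes over the countably many truncations at `k`. -/
lemma dimH_eventually_high_le (k : ℤ) {d : ℝ≥0∞}
    (h : ∀ A : Matrix (Fin m) (Fin n) (LaurentSeries F), dimH (highSet D E A k) ≤ d) :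
    dimH {Z : Matrix (Fin m) (Fin n) (LaurentSeries F) | ∀ j : ℕ, High D E Z (k + j)} ≤ d := by
  haveI : Countable F[X] := by
    rw [← Cardinal.mk_le_aleph0_iff]
    exact Polynomial.cardinalMk_le_max.trans (max_le (Cardinal.mk_le_aleph0_iff.2 inferInstance)
      le_rfl)
  let rep : (Fin m → Fin n → F[X]) → Matrix (Fin m) (Fin n) (LaurentSeries F) :=
    fun c r l => HahnSeries.single (k - 1) (1 : F) * pk (c r l)
  have hsub : {Z : Matrix (Fin m) (Fin n) (LaurentSeries F) | ∀ j : ℕ, High D E Z (k + j)}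
      ⊆ ⋃ c, highSet D E (rep c) k := by
    intro Z hZ
    choose c hc using fun r l => exists_poly (Z r l) k
    exact Set.mem_iUnion.2 ⟨c, fun r l j hj => hc r l j hj, hZ⟩
  refine (dimH_mono hsub).trans ?_
  rw [dimH_iUnion]
  exact iSup_le fun c => h _

end Dimension

/-! ### Singular matrices are eventually high -/

section Singular

variable {F}
variable {m n : ℕ}
variable {Z : Matrix (Fin m) (Fin n) (LaurentSeries F)} {k : ℤ} {D E : ℝ}

lemma absv_le_supNorm {d : ℕ} (v : Fin d → LaurentSeries F) (j : Fin d) :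
    absv F (v j) ≤ supNorm F v :=
  le_ciSup (Set.finite_range fun j => absv F (v j)).bddAbove j

/-- A line of large renormalised degree has nonnegative score. -/
lemma high_of_line (hm : 1 ≤ m) (hn : 1 ≤ n) (hD : 0 ≤ D) (hk : 0 ≤ k) {u : ℝ}
    (hE : 0 ≤ E) (hu : E * ((m : ℝ) + n - 1) + D * m ≤ u)
    {W : Submodule (KF F) (VecK F m n)} (hW : Module.finrank (KF F) W = 1)
    (hphi : u ≤ phi Z k W) : High D E Z k := by
  have h2 : 1 ≤ m + n - 1 := by lia
  refine ⟨1, Finset.mem_Icc.2 ⟨le_rfl, h2⟩, le_trans ?_ (le_best hm hn hD hk le_rfl h2 hW)⟩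
  have g0 := gam_pos hm hn le_rfl h2
  have g1 := gam_le_one hm hn 1
  rw [score, hW, sub_nonneg]
  have hdm : D * drop Z k W ≤ D * m := mul_le_mul_of_nonneg_left drop_le_real hD
  have hDm : 0 ≤ D * m := by positivity
  rw [le_div_iff₀ g0]
  calc D * drop Z k W * gam m n (1 : ℕ) ≤ D * m * gam m n (1 : ℕ) := by gcongr
    _ ≤ D * m * 1 := by gcongr
    _ ≤ _ := by push_cast; linarith

/-- An approximation of quality `q^(-u)` at the time `k` yields a line of renormalised degree at
least `u`. -/
lemma exists_line_of_approx (hm : 1 ≤ m) (hn : 1 ≤ n) {u : ℝ}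
    {p : Fin m → F[X]} {qv : Fin n → F[X]}
    (h1 : supNorm F (fun r => Z.mulVec (fun l => polyToK F (qv l)) r + polyToK F (p r))
      ≤ (Fintype.card F : ℝ) ^ ((m : ℝ) * k / (m + n) - u - k))
    (h2 : 0 < supNorm F (fun l => polyToK F (qv l)))
    (h3 : supNorm F (fun l => polyToK F (qv l))
      ≤ (Fintype.card F : ℝ) ^ ((m : ℝ) * k / (m + n) - u)) :
    ∃ W : Submodule (KF F) (VecK F m n), Module.finrank (KF F) W = 1 ∧ u ≤ phi Z k W := by
  set y : ℝ := (m : ℝ) * k / (m + n) - u with hy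
  have hq : qv ≠ 0 := by
    rintro rfl
    have : (fun l : Fin n => polyToK F ((0 : Fin n → F[X]) l)) = fun _ => 0 := by
      funext l; simp
    rw [this] at h2
    haveI : Nonempty (Fin n) := ⟨⟨0, hn⟩⟩
    refine h2.ne' ?_
    change ⨆ _ : Fin n, absv F 0 = 0
    rw [ciSup_const, absv, if_pos rfl]
  have hw : (Sum.elim p qv : Vec F m n) ≠ 0 := by
    intro h
    refine hq (funext fun l => ?_)
    simpa using congrFun h (.inr l)
  have t1 := Int.floor_le y
  have t2 := Int.lt_floor_add_one y
  have hmem : (Sum.elim p qv : Vec F m n) ∈ H Z k ⌊y⌋ ⊤ := by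
    refine ⟨trivial, fun r j hj => ?_, fun l j hj => ?_⟩
    · have e : fx Z r (Sum.elim p qv)
          = Z.mulVec (fun l => polyToK F (qv l)) r + polyToK F (p r) := by
        rw [fx_apply, add_comm]
        rfl
      rw [e]
      refine coeff_eq_zero_of_absv_le ((absv_le_supNorm (fun r =>
        Z.mulVec (fun l => polyToK F (qv l)) r + polyToK F (p r)) r).trans h1) ?_
      have : (j : ℝ) + 1 ≤ k - ⌊y⌋ := by exact_mod_cast (show j + 1 ≤ k - ⌊y⌋ by lia)
      linarith
    · refine coeff_eq_zero_of_absv_le ((absv_le_supNorm (fun l =>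
        polyToK F (qv l)) l).trans h3) ?_
      have : (j : ℝ) + 1 ≤ -⌊y⌋ := by exact_mod_cast (show j + 1 ≤ -⌊y⌋ by lia)
      linarith
  obtain ⟨W, hW, hdeg⟩ := exists_line hmem hw
  refine ⟨W, hW, ?_⟩
  rw [phi, hW]
  have : -(⌊y⌋ : ℝ) ≤ deg Z k W := by exact_mod_cast hdeg
  push_cast
  rw [one_mul]
  linarith

/-- Singular matrices are high at all large times. -/
lemma eventually_high (hm : 1 ≤ m) (hn : 1 ≤ n) (hD : 0 ≤ D) (hE : 0 ≤ E)
    (hZ : ∀ ε : ℝ, 0 < ε → ∃ T₀ : ℝ, 1 ≤ T₀ ∧ ∀ T : ℝ, T₀ ≤ T →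
      ∃ (p : Fin m → F[X]) (qv : Fin n → F[X]),
        supNorm F (fun k => Z.mulVec (fun l => polyToK F (qv l)) k + polyToK F (p k))
            ≤ ε * T ^ (-((n : ℝ) / m)) ∧
        0 < supNorm F (fun l => polyToK F (qv l)) ∧
        supNorm F (fun l => polyToK F (qv l)) ≤ T) :
    ∃ k₀ : ℕ, ∀ j : ℕ, High D E Z (k₀ + j) := by
  have m1 : (1 : ℝ) ≤ m := by exact_mod_cast hm
  have n1 : (1 : ℝ) ≤ n := by exact_mod_cast hn
  have q0 := card_pos_real (F := F)
  obtain ⟨u, hu⟩ : ∃ u : ℝ, u = E * ((m : ℝ) + n - 1) + D * m := ⟨_, rfl⟩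
  -- With `T = q^(m k / (m + n) - u)`, this `ε` makes `ε T^(-n/m)` equal to `q^(-k) T`.
  obtain ⟨T₀, hT₀, hT⟩ := hZ ((Fintype.card F : ℝ) ^ (-u - u * n / m)) (Real.rpow_pos_of_pos q0 _)
  refine ⟨⌈(Real.logb (Fintype.card F) T₀ + u) * (m + n) / m⌉₊, fun j => ?_⟩
  set k : ℤ := (⌈(Real.logb (Fintype.card F) T₀ + u) * (m + n) / m⌉₊ : ℤ) + j with hk
  have hk1 : (Real.logb (Fintype.card F) T₀ + u) * (m + n) / m ≤ k := by
    rw [hk]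
    push_cast
    exact (Nat.le_ceil _).trans (le_add_of_nonneg_right (Nat.cast_nonneg j))
  have hk2 : Real.logb (Fintype.card F) T₀ ≤ (m : ℝ) * k / (m + n) - u := by
    rw [div_le_iff₀ (by linarith)] at hk1
    rw [le_sub_iff_add_le, le_div_iff₀ (by linarith)]
    linarith
  obtain ⟨p, qv, h1, h2, h3⟩ := hT ((Fintype.card F : ℝ) ^ ((m : ℝ) * k / (m + n) - u))
    ((Real.logb_le_iff_le_rpow one_lt_card (by linarith)).1 hk2)
  have e : (Fintype.card F : ℝ) ^ (-u - u * n / m)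
      * ((Fintype.card F : ℝ) ^ ((m : ℝ) * k / (m + n) - u)) ^ (-((n : ℝ) / m))
      = (Fintype.card F : ℝ) ^ ((m : ℝ) * k / (m + n) - u - k) := by
    rw [← Real.rpow_mul q0.le, ← Real.rpow_add q0]
    congr 1
    field_simp
    ring
  rw [e] at h1
  obtain ⟨W, hW, hphi⟩ := exists_line_of_approx hm hn h1 h2 h3
  exact high_of_line hm hn hD (by lia) hE hu.ge hW hphi

end Singular

/-- A sufficiently large `c` makes the contraction factor as close as desired to the optimal
one. -/
lemma exists_rate_le (F : Type*) [Field F] [Fintype F] (m n : ℕ) {e : ℝ}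
    (he : (m : ℝ) * n - m * n / (m + n) < e) :
    ∃ c : ℝ, 0 ≤ c ∧ rate F m n c ≤ (Fintype.card F : ℝ) ^ e := by
  have q1 := one_lt_card (F := F)
  have q0 := card_pos_real (F := F)
  have hgap := Real.rpow_lt_rpow_of_exponent_lt q1 he
  have hlim : Tendsto (fun c : ℝ => ((m : ℝ) + n) * (Fintype.card F : ℝ) ^ ((m : ℝ) * n - c))
      atTop (nhds (((m : ℝ) + n) * 0)) := by
    refine Tendsto.const_mul _ ?_
    exact (tendsto_rpow_atBot_of_base_gt_one _ q1).comp
      (tendsto_atBot_add_const_left _ _ tendsto_neg_atTop_atBot)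
  rw [mul_zero] at hlim
  obtain ⟨c, h1, h2⟩ := ((hlim.eventually_lt_const (sub_pos.2 hgap)).and
    (eventually_ge_atTop 0)).exists
  exact ⟨c, h2, by rw [rate]; linarith⟩

lemma dimH_sing_le (F : Type*) [Field F] [Fintype F] (m n : ℕ) (hm : 1 ≤ m) (hn : 1 ≤ n)
    {e : ℝ} (he : (m : ℝ) * n - m * n / (m + n) < e) :
    dimH {A : Matrix (Fin m) (Fin n) (LaurentSeries F) |
        ∀ ε : ℝ, 0 < ε → ∃ T₀ : ℝ, 1 ≤ T₀ ∧ ∀ T : ℝ, T₀ ≤ T →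
          ∃ (p : Fin m → Polynomial F) (qv : Fin n → Polynomial F),
            supNorm F (fun k => A.mulVec (fun l => polyToK F (qv l)) k + polyToK F (p k))
                ≤ ε * T ^ (-((n : ℝ) / m)) ∧
            0 < supNorm F (fun l => polyToK F (qv l)) ∧
            supNorm F (fun l => polyToK F (qv l)) ≤ T}
      ≤ ENNReal.ofReal e := by
  have m1 : (1 : ℝ) ≤ m := by exact_mod_cast hm
  have n1 : (1 : ℝ) ≤ n := by exact_mod_cast hn
  have he0 : 0 ≤ e := by
    refine le_trans (sub_nonneg.2 ?_) he.le
    exact div_le_self (by positivity) (by linarith)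
  obtain ⟨c, hc, hrate⟩ := exists_rate_le F m n he
  -- `D` makes an increase of the drop costly, `B` bounds how much the ranking of the subspaces
  -- can change in one step, and `E` makes ties far from the overall maximum.
  obtain ⟨D, hD⟩ : ∃ D : ℝ, D = ((m : ℝ) + n) ^ 2 + c := ⟨_, rfl⟩
  obtain ⟨B, hB⟩ : ∃ B : ℝ, B = ((m : ℝ) + n) * m + D * m := ⟨_, rfl⟩
  obtain ⟨E, hE⟩ : ∃ E : ℝ, E = D * m + B / 2 + c + ((m : ℝ) + n) ^ 2 := ⟨_, rfl⟩
  have hD0 : 0 ≤ D := by rw [hD]; positivity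
  have hB0 : 0 ≤ B := by rw [hB]; positivity
  have hE0 : 0 ≤ E := by rw [hE]; positivity
  refine (dimH_mono (t := ⋃ k₀ : ℕ, {Z : Matrix (Fin m) (Fin n) (LaurentSeries F) |
    ∀ j : ℕ, High D E Z ((k₀ : ℤ) + j)}) fun Z hZ =>
      Set.mem_iUnion.2 (eventually_high hm hn hD0 hE0 hZ)).trans ?_
  rw [dimH_iUnion]
  refine iSup_le fun k₀ => dimH_eventually_high_le _ fun A => ?_
  refine dimH_highSet_le A k₀ (Q := rate F m n c) ?_ he0 hrate fun B' j hj =>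
    sum_height_le hm hn (by lia) hc hD.ge hB.ge hE.ge hj
  have q0 := card_pos_real (F := F)
  rw [rate]
  positivity

end SingDim

/-- **Theorem 1.1.** For all `m, n ≥ 1`, the set of singular `m × n` matrices with entries
in `K_∞` has Hausdorff dimension at most `mn - mn/(m+n)`, computed in
`M_{m,n}(K_∞) ≅ K_∞^{mn}` with the sup-norm metric.  A matrix `A` is singular if for every
`ε > 0` there is `T₀ ≥ 1` such that for every `T ≥ T₀` there are `p ∈ R^m`, `q ∈ R^n` with
`‖Aq + p‖ ≤ ε T^{-n/m}` and `0 < ‖q‖ ≤ T`. -/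
theorem stmt0 (F : Type*) [Field F] [Fintype F] (m n : ℕ) (hm : 1 ≤ m) (hn : 1 ≤ n) :
    dimH {A : Matrix (Fin m) (Fin n) (LaurentSeries F) |
        ∀ ε : ℝ, 0 < ε → ∃ T₀ : ℝ, 1 ≤ T₀ ∧ ∀ T : ℝ, T₀ ≤ T →
          ∃ (p : Fin m → Polynomial F) (qv : Fin n → Polynomial F),
            supNorm F (fun k => A.mulVec (fun l => polyToK F (qv l)) k + polyToK F (p k))
                ≤ ε * T ^ (-((n : ℝ) / m)) ∧
            0 < supNorm F (fun l => polyToK F (qv l)) ∧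
            supNorm F (fun l => polyToK F (qv l)) ≤ T}
      ≤ ENNReal.ofReal ((m : ℝ) * n - (m : ℝ) * n / (m + n)) := by
  have h0 : (0 : ℝ) ≤ (m : ℝ) * n - (m : ℝ) * n / (m + n) := by
    have m1 : (1 : ℝ) ≤ m := by exact_mod_cast hm
    have n1 : (1 : ℝ) ≤ n := by exact_mod_cast hn
    exact sub_nonneg.2 (div_le_self (by positivity) (by linarith))
  refine ENNReal.le_of_forall_pos_le_add fun δ hδ _ => ?_
  rw [← ENNReal.ofReal_coe_nnreal, ← ENNReal.ofReal_add h0 δ.coe_nonneg]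
  exact SingDim.dimH_sing_le F m n hm hn (lt_add_of_pos_right _ hδ)

end
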